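/- arXiv:1405.6408 — 2 statements merged into one kernel-verified Lean document; each statement's English description precedes it below -/
import Mathlib

section
/- Let (n_t) and (m_t) be sequences of positive integers with n_t ≤ m_t, n_t → ∞, and n_t/m_t → c̄ ∈ (0,1) as t → ∞. Write μ(p) = μ0(p, n_t, m_t) and κ4 = μ(4) − 4μ(3)μ(1) − 3μ(2)² + 12μ(2)μ(1)² − 6μ(1)⁴. Then n_t⁶·κ4 → −e⁴·(1−c̄)^{4(1−c̄)/c̄ − 2}·( c̄³(16 + c̄(6c̄−23)) − 12(1−c̄)c̄²(3c̄−4)·ln(1−c̄) + 48c̄(1−c̄)²·(ln(1−c̄))² + 16(1−c̄)²·(ln(1−c̄))³ ) as t → ∞. -/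
open Finset Filter Topology

/-- Exact `p`-th moment of the GLRT statistic under `H₀`. -/
noncomputable def mu0 (p n m : ℕ) : ℝ :=
  Real.Gamma ((m : ℝ) * n) / ((n : ℝ) ^ p * Real.Gamma ((m : ℝ) * n - p)) *
    ∏ j ∈ Finset.range n,
      Real.Gamma ((m : ℝ) - n + 1 - p / n + j) / Real.Gamma ((m : ℝ) - n + 1 + j)

/-!
As a function of `p`, `log (mu0 p n m)` is a linear term plus a signed sum of values of `log Γ`
along arithmetic progressions with steps `-1` and `-1 / n`. Its finite differences at `p = 0` are
sandwiched between explicit expressions: `log Γ` is convex, and by the functional equation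
`log Γ (x + 1) - log Γ x = log x` each higher difference of `log Γ` is comparable with the
corresponding derivative of `x log x - x`, so that the sum over the factors of `mu0` telescopes.
Hence `n ^ (2 * k)` times the difference of order `k + 1` has a limit `a k`. Expressing the fourth
cumulant of `exp ∘ f` through the finite differences of `f` and expanding the exponentials leaves,
at the order `n ^ (-6)`, the polynomial `exp (a 0) ^ 4 * (16 * a 1 ^ 3 + 12 * a 1 * a 2 + a 3)`.
-/

section FiniteDifferences

open scoped fwdDiff

variable {M G : Type*} [AddCommMonoid M] [AddCommGroup G]

theorem fwdDiff_iter_const (h : M) (c : G) (k : ℕ) :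
    (Δ_[h])^[k] (fun _ ↦ c) = fun _ ↦ if k = 0 then c else 0 := by
  cases k with
  | zero => simp
  | succ k =>
    rw [Function.iterate_succ_apply, fwdDiff_const, Function.iterate_fixed (fwdDiff_const h 0)]
    simp

theorem fwdDiff_iter_comp_add_nsmul (f : M → G) (a b : M) (k p : ℕ) :
    (Δ_[1])^[k] (fun q : ℕ ↦ f (a + q • b)) p = (Δ_[b])^[k] f (a + p • b) := by
  simp [fwdDiff_iter_eq_sum_shift, add_smul, add_assoc]

theorem exists_fwdDiff_iter_eq_pow_mul {F : ℕ → ℝ → ℝ} {h y : ℝ} (k : ℕ)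
    (hF : ∀ i < k, ∀ θ ∈ Set.Icc (0 : ℝ) k,
      HasDerivAt (F i) (F (i + 1) (y + θ * h)) (y + θ * h)) :
    ∃ θ ∈ Set.Icc (0 : ℝ) k, (Δ_[h])^[k] (F 0) y = h ^ k * F k (y + θ * h) := by
  induction k generalizing F with
  | zero => exact ⟨0, by simp, by simp⟩
  | succ k ih =>
    push_cast at hF ⊢
    have hderiv : ∀ i < k, ∀ θ ∈ Set.Icc (0 : ℝ) k,
        HasDerivAt (Δ_[h] (F i)) (Δ_[h] (F (i + 1)) (y + θ * h)) (y + θ * h) := by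
      intro i hi θ hθ
      have hshift := hF i (hi.trans k.lt_succ_self) (θ + 1) ⟨by linarith [hθ.1], by linarith [hθ.2]⟩
      rw [add_one_mul, ← add_assoc] at hshift
      exact (hshift.comp_add_const _ h).sub
        (hF i (hi.trans k.lt_succ_self) θ ⟨hθ.1, by linarith [hθ.2]⟩)
    obtain ⟨θ, hθ, hiter⟩ := ih hderiv
    have hstep : ∀ τ ∈ Set.Icc (0 : ℝ) 1, HasDerivAt (fun τ ↦ F k (y + (θ + τ) * h))
        (F (k + 1) (y + (θ + τ) * h) * h) τ := fun τ hτ ↦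
      (hF k k.lt_succ_self (θ + τ) ⟨by linarith [hθ.1, hτ.1], by linarith [hθ.2, hτ.2]⟩).comp τ
        ((((hasDerivAt_id τ).const_add θ).mul_const h |>.const_add y).congr_deriv (one_mul h))
    obtain ⟨τ, hτ, hslope⟩ := exists_hasDerivAt_eq_slope _ _ zero_lt_one
      (fun τ hτ ↦ (hstep τ hτ).continuousAt.continuousWithinAt)
      (fun τ hτ ↦ hstep τ (Set.Ioo_subset_Icc_self hτ))
    refine ⟨θ + τ, ⟨by linarith [hθ.1, hτ.1], by linarith [hθ.2, hτ.2]⟩, ?_⟩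
    rw [Function.iterate_succ_apply, hiter, pow_succ, mul_assoc, mul_comm h, hslope, fwdDiff]
    ring_nf

theorem tendsto_fwdDiff_iter_atTop_nhds_zero {f : ℝ → ℝ} (hf : Tendsto f atTop (𝓝 0)) (h : ℝ)
    (k : ℕ) : Tendsto ((Δ_[h])^[k] f) atTop (𝓝 0) := by
  induction k generalizing f with
  | zero => exact hf
  | succ _ ih =>
    have hshift := hf.comp (tendsto_atTop_add_const_right _ h tendsto_id)
    exact ih (by simpa using! hshift.sub hf)

theorem le_of_sub_add_one_le_sub_add_one {f g : ℝ → ℝ} {a x : ℝ}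
    (hf : Tendsto f atTop (𝓝 0)) (hg : Tendsto g atTop (𝓝 0))
    (hfg : ∀ y > a, f y - f (y + 1) ≤ g y - g (y + 1)) (hx : a < x) : f x ≤ g x := by
  have hanti : Antitone fun N : ℕ ↦ g (x + N) - f (x + N) := by
    refine antitone_nat_of_succ_le fun N ↦ ?_
    have := hfg (x + N) (by linarith [N.cast_nonneg (α := ℝ)])
    push_cast
    rw [← add_assoc]
    linarith
  have hlim : Tendsto (fun N : ℕ ↦ g (x + N) - f (x + N)) atTop (𝓝 0) := by
    simpa [Function.comp_def] using
      (hg.sub hf).comp (tendsto_atTop_add_const_left _ x tendsto_natCast_atTop_atTop)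
  simpa using hanti.le_of_tendsto hlim 0

end FiniteDifferences

section LogGamma

open scoped Nat fwdDiff

/-- The functions `(-1)ᵏ (d/dx)ᵏ (x log x - x)`. The case `k = 0` is the main term of Stirling's
expansion of `log Γ`; the signs are chosen so that all of them with `k ≥ 1` are decreasing. -/
noncomputable def stirlingDeriv : ℕ → ℝ → ℝ
  | 0, x => x * Real.log x - x
  | 1, x => -Real.log x
  | k + 2, x => k ! / x ^ (k + 1)

theorem hasDerivAt_stirlingDeriv (k : ℕ) {x : ℝ} (hx : 0 < x) :
    HasDerivAt (stirlingDeriv k) (-stirlingDeriv (k + 1) x) x := by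
  match k with
  | 0 =>
    refine ((Real.hasDerivAt_mul_log hx.ne').fun_sub (hasDerivAt_id' x)).congr_deriv ?_
    simp [stirlingDeriv]
  | 1 => exact (Real.hasDerivAt_log hx.ne').fun_neg.congr_deriv (by simp [stirlingDeriv])
  | k + 2 =>
    refine ((hasDerivAt_const x (k ! : ℝ)).fun_div (hasDerivAt_pow (k + 1) x)
      (by positivity)).congr_deriv ?_
    simp only [stirlingDeriv, Nat.factorial_succ]
    push_cast
    field_simp
    ring

theorem stirlingDeriv_le_stirlingDeriv (k : ℕ) {x y : ℝ} (hx : 0 < x) (hxy : x ≤ y) :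
    stirlingDeriv (k + 1) y ≤ stirlingDeriv (k + 1) x := by
  cases k with
  | zero => exact neg_le_neg (Real.log_le_log hx hxy)
  | succ k => simp only [stirlingDeriv]; gcongr

theorem tendsto_stirlingDeriv_atTop (k : ℕ) : Tendsto (stirlingDeriv (k + 2)) atTop (𝓝 0) :=
  tendsto_const_nhds.div_atTop (tendsto_pow_atTop k.succ_ne_zero)

theorem fwdDiff_iter_stirlingDeriv_mem_Icc (i k : ℕ) {h x : ℝ} (hh : 0 < h)
    (hx : 0 < x - (k + 1) * h) :
    (Δ_[-h])^[k + 1] (stirlingDeriv i) x ∈ Set.Icc (h ^ (k + 1) * stirlingDeriv (i + k + 1) x)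
      (h ^ (k + 1) * stirlingDeriv (i + k + 1) (x - (k + 1) * h)) := by
  have hpos : ∀ θ ∈ Set.Icc (0 : ℝ) (k + 1 : ℕ),
      x - (k + 1) * h ≤ x + θ * -h ∧ x + θ * -h ≤ x := by
    rintro θ ⟨h0, h1⟩
    push_cast at h1
    constructor <;> nlinarith
  obtain ⟨θ, hθ, hiter⟩ := exists_fwdDiff_iter_eq_pow_mul (h := -h) (y := x)
    (F := fun j x ↦ (-1) ^ j * stirlingDeriv (i + j) x) (k + 1) fun j _ θ hθ ↦
      ((hasDerivAt_stirlingDeriv (i + j) (hx.trans_le (hpos θ hθ).1)).const_mul _).congr_deriv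
        (by ring_nf)
  have hvalue : (Δ_[-h])^[k + 1] (stirlingDeriv i) x =
      h ^ (k + 1) * stirlingDeriv (i + k + 1) (x + θ * -h) := by
    simpa [← mul_assoc, ← mul_pow, add_assoc] using hiter
  obtain ⟨hlow, hupp⟩ := hpos θ hθ
  rw [hvalue]
  constructor <;> gcongr
  · exact stirlingDeriv_le_stirlingDeriv _ (hx.trans_le hlow) hupp
  · exact stirlingDeriv_le_stirlingDeriv _ hx hlow

theorem stirlingDeriv_sub_add_one_mem_Icc (k : ℕ) {x : ℝ} (hx : 0 < x) :
    stirlingDeriv k x - stirlingDeriv k (x + 1) ∈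
      Set.Icc (stirlingDeriv (k + 1) (x + 1)) (stirlingDeriv (k + 1) x) := by
  simpa [fwdDiff] using
    fwdDiff_iter_stirlingDeriv_mem_Icc k 0 (x := x + 1) one_pos (by simpa using hx)

theorem sum_stirlingDeriv_add_one_le (k n : ℕ) {a : ℝ} (ha : 0 < a) :
    ∑ j ∈ range n, stirlingDeriv (k + 1) (a + 1 + j) ≤
      stirlingDeriv k a - stirlingDeriv k (a + n) := by
  have htel := sum_range_sub' (fun j : ℕ ↦ stirlingDeriv k (a + j)) n
  push_cast [add_zero, ← add_assoc] at htel
  rw [← htel]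
  refine sum_le_sum fun j _ ↦ ?_
  rw [add_right_comm]
  exact (stirlingDeriv_sub_add_one_mem_Icc k (by positivity)).1

theorem le_sum_stirlingDeriv (k n : ℕ) {a : ℝ} (ha : 0 < a) :
    stirlingDeriv k a - stirlingDeriv k (a + n) ≤
      ∑ j ∈ range n, stirlingDeriv (k + 1) (a + j) := by
  have htel := sum_range_sub' (fun j : ℕ ↦ stirlingDeriv k (a + j)) n
  push_cast [add_zero, ← add_assoc] at htel
  rw [← htel]
  exact sum_le_sum fun j _ ↦ (stirlingDeriv_sub_add_one_mem_Icc k (by positivity)).2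

/-- The logarithm of the Gamma function, meaningful for positive arguments. -/
noncomputable def logGamma (x : ℝ) : ℝ := Real.log (Real.Gamma x)

theorem logGamma_add_one {x : ℝ} (hx : 0 < x) : logGamma (x + 1) = logGamma x + Real.log x := by
  rw [logGamma, Real.Gamma_add_one hx.ne', Real.log_mul hx.ne' (Real.Gamma_pos_of_pos hx).ne',
    add_comm, logGamma]

theorem fwdDiff_logGamma_mem_Icc {h x : ℝ} (hh : 0 < h) (hx : 0 < x - h - 1) :
    Δ_[-h] logGamma x ∈ Set.Icc (-(h * Real.log x)) (-(h * Real.log (x - h - 1))) := by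
  have hconv : ConvexOn ℝ (Set.Ioi 0) logGamma := Real.convexOn_log_Gamma
  have hright := hconv.slope_mono_adjacent (x := x - h) (y := x) (z := x + 1)
    (show 0 < x - h by linarith) (show 0 < x + 1 by linarith) (by linarith) (by linarith)
  have hleft := hconv.slope_mono_adjacent (x := x - h - 1) (y := x - h) (z := x)
    hx (show 0 < x by linarith) (by linarith) (by linarith)
  have hfunc := logGamma_add_one hx
  rw [sub_add_cancel] at hfunc
  rw [logGamma_add_one (by linarith), add_sub_cancel_left, add_sub_cancel_left, div_one,
    sub_sub_cancel, div_le_iff₀ hh] at hright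
  rw [hfunc, add_sub_cancel_left, sub_sub_cancel, sub_sub_cancel, div_one, le_div_iff₀ hh,
    ← hfunc] at hleft
  rw [fwdDiff, ← sub_eq_add_neg]
  constructor <;> linarith

theorem tendsto_fwdDiff_logGamma_add_log {h : ℝ} (hh : 0 < h) :
    Tendsto (fun x ↦ Δ_[-h] logGamma x + h * Real.log x) atTop (𝓝 0) := by
  have hlog := ((Real.tendsto_log_comp_add_sub_log (-(h + 1))).const_mul (-h))
  rw [mul_zero] at hlog
  refine tendsto_of_tendsto_of_tendsto_of_le_of_le' tendsto_const_nhds hlog ?_ ?_ <;>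
    filter_upwards [eventually_gt_atTop (h + 1)] with x hx
  · linarith [(fwdDiff_logGamma_mem_Icc hh (x := x) (by linarith)).1]
  · rw [← sub_eq_add_neg, ← sub_sub]
    linarith [(fwdDiff_logGamma_mem_Icc hh (x := x) (by linarith)).2]

theorem tendsto_fwdDiff_iter_logGamma {h : ℝ} (hh : 0 < h) (k : ℕ) :
    Tendsto ((Δ_[-h])^[k + 2] logGamma) atTop (𝓝 0) := by
  have hsecond : Tendsto ((Δ_[-h])^[2] logGamma) atTop (𝓝 0) := by
    have hrem := tendsto_fwdDiff_iter_atTop_nhds_zero (tendsto_fwdDiff_logGamma_add_log hh) (-h) 1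
    have hlog := (Real.tendsto_log_comp_add_sub_log (-h)).const_mul h
    refine (sub_zero (0 : ℝ) ▸ hrem.sub (mul_zero h ▸ hlog)).congr fun x ↦ ?_
    simp only [Function.iterate_succ_apply, Function.iterate_zero_apply, fwdDiff]
    ring
  rw [Function.iterate_add_apply]
  exact tendsto_fwdDiff_iter_atTop_nhds_zero hsecond _ _

theorem fwdDiff_iter_logGamma_sub_add_one (k : ℕ) {h x : ℝ} (hh : 0 < h) (hx : 0 < x - k * h) :
    (Δ_[-h])^[k] logGamma x - (Δ_[-h])^[k] logGamma (x + 1) = (Δ_[-h])^[k] (stirlingDeriv 1) x := by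
  rw [← fwdDiff_iter_comp_add]
  simp only [fwdDiff_iter_eq_sum_shift, ← sum_sub_distrib, ← smul_sub]
  refine sum_congr rfl fun i hi ↦ ?_
  have hik : (i : ℝ) ≤ k := by exact_mod_cast Nat.le_of_lt_succ (mem_range.1 hi)
  have hpos : 0 < x + i • -h := by simp only [nsmul_eq_mul]; nlinarith
  rw [logGamma_add_one hpos, sub_add_cancel_left, stirlingDeriv]

-- The two sides have the same limit at infinity, and the functional equation compares their
-- decrements along `x, x + 1, x + 2, …`.
theorem fwdDiff_iter_logGamma_mem_Icc (k : ℕ) {h x : ℝ} (hh : 0 < h)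
    (hx : 0 < x - (k + 1) * h - 1) :
    (Δ_[-h])^[k + 1] logGamma x ∈ Set.Icc (h ^ (k + 1) * stirlingDeriv (k + 1) x)
      (h ^ (k + 1) * stirlingDeriv (k + 1) (x - (k + 1) * h - 1)) := by
  cases k with
  | zero => simpa [stirlingDeriv] using fwdDiff_logGamma_mem_Icc hh (by simpa using hx)
  | succ k =>
    push_cast at hx ⊢
    have hlim := tendsto_fwdDiff_iter_logGamma hh k
    have hlow : Tendsto (fun y ↦ h ^ (k + 2) * stirlingDeriv (k + 2) y) atTop (𝓝 0) := by
      simpa using (tendsto_stirlingDeriv_atTop k).const_mul (h ^ (k + 2))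
    have hupp : Tendsto (fun y ↦ h ^ (k + 2) * stirlingDeriv (k + 2) (y - (k + 1 + 1) * h - 1))
        atTop (𝓝 0) := by
      simp only [sub_sub, sub_eq_add_neg _ (_ + (1 : ℝ))]
      exact hlow.comp (tendsto_atTop_add_const_right _ _ tendsto_id)
    have hdec : ∀ y > (k + 1 + 1) * h + 1,
        (Δ_[-h])^[k + 2] logGamma y - (Δ_[-h])^[k + 2] logGamma (y + 1) ∈
          Set.Icc (h ^ (k + 2) * stirlingDeriv (k + 3) y)
            (h ^ (k + 2) * stirlingDeriv (k + 3) (y - (k + 1 + 1) * h)) := by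
      intro y hy
      rw [fwdDiff_iter_logGamma_sub_add_one _ hh (by push_cast; linarith)]
      convert fwdDiff_iter_stirlingDeriv_mem_Icc 1 (k + 1) hh (x := y)
        (by push_cast; linarith) using 4 <;> grind
    have hkh : 0 < (k + 1 + 1) * h := by positivity
    refine ⟨le_of_sub_add_one_le_sub_add_one hlow hlim (a := (k + 1 + 1) * h + 1) ?_ (by linarith),
      le_of_sub_add_one_le_sub_add_one hlim hupp (a := (k + 1 + 1) * h + 1) ?_ (by linarith)⟩ <;>
      intro y hy <;> rw [← mul_sub]
    · exact (mul_le_mul_of_nonneg_left (stirlingDeriv_sub_add_one_mem_Icc _ (by linarith)).2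
        (by positivity)).trans (hdec y hy).1
    · refine (hdec y hy).2.trans (mul_le_mul_of_nonneg_left ?_ (by positivity))
      rw [show y + 1 - (k + 1 + 1) * h - 1 = y - (k + 1 + 1) * h by ring]
      simpa only [sub_add_cancel] using (stirlingDeriv_sub_add_one_mem_Icc (k + 2)
        (x := y - (k + 1 + 1) * h - 1) (by linarith)).1

theorem sum_fwdDiff_iter_logGamma_mem_Icc (k n : ℕ) {h a : ℝ} (hh0 : 0 < h) (hh1 : h ≤ 1)
    (ha : k + 2 < a) :
    ∑ j ∈ range n, (Δ_[-h])^[k + 1] logGamma (a + 1 + j) ∈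
      Set.Icc (h ^ (k + 1) * (stirlingDeriv k (a + 1) - stirlingDeriv k (a + 1 + n)))
        (h ^ (k + 1) * (stirlingDeriv k (a - (k + 2)) - stirlingDeriv k (a - (k + 2) + n))) := by
  have hkh : (k + 1) * h ≤ k + 1 := mul_le_of_le_one_right (by positivity) hh1
  have hterm : ∀ j : ℕ, (Δ_[-h])^[k + 1] logGamma (a + 1 + j) ∈
      Set.Icc (h ^ (k + 1) * stirlingDeriv (k + 1) (a + 1 + j))
        (h ^ (k + 1) * stirlingDeriv (k + 1) (a - (k + 2) + 1 + j)) := by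
    intro j
    have hgap : 0 < a - (k + 2) + 1 + j := by linarith [j.cast_nonneg (α := ℝ)]
    have hbound := fwdDiff_iter_logGamma_mem_Icc k hh0 (x := a + 1 + j) (by linarith)
    refine ⟨hbound.1, hbound.2.trans (mul_le_mul_of_nonneg_left ?_ (by positivity))⟩
    exact stirlingDeriv_le_stirlingDeriv k hgap (by linarith)
  constructor
  · grw [le_sum_stirlingDeriv k n (a := a + 1) (by linarith [k.cast_nonneg (α := ℝ)]), mul_sum]
    exact sum_le_sum fun j _ ↦ (hterm j).1
  · grw [← sum_stirlingDeriv_add_one_le k n (a := a - (k + 2)) (by linarith), mul_sum]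
    exact sum_le_sum fun j _ ↦ (hterm j).2

end LogGamma

section LogMoment

open scoped fwdDiff

/-- The logarithm of `mu0 p n m`, as a sum of values of `log Γ` (see `mu0_eq_exp_logMu0`). -/
noncomputable def logMu0 (n m p : ℕ) : ℝ :=
  logGamma (m * n) - logGamma (m * n - p) - p * Real.log n +
    ∑ j ∈ range n, (logGamma (m - n + 1 - p / n + j) - logGamma (m - n + 1 + j))

theorem logMu0_zero (n m : ℕ) : logMu0 n m 0 = 0 := by simp [logMu0]

theorem mu0_eq_exp_logMu0 {n m p : ℕ} (hn : 0 < n) (hp : (p : ℝ) < n * (m - n + 1)) :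
    mu0 p n m = Real.exp (logMu0 n m p) := by
  have hn1 : (1 : ℝ) ≤ n := by exact_mod_cast hn
  have hn0 : (0 : ℝ) < n := by linarith
  have hpn : (p : ℝ) / n < m - n + 1 := by rwa [div_lt_iff₀' hn0]
  have hp0 : (0 : ℝ) ≤ p / n := by positivity
  have hpmn : (p : ℝ) < m * n := by nlinarith
  have hexp : ∀ {x : ℝ}, 0 < x → Real.exp (logGamma x) = Real.Gamma x := fun hx ↦
    Real.exp_log (Real.Gamma_pos_of_pos hx)
  have hprod : ∀ j ∈ range n, Real.Gamma (m - n + 1 - p / n + j) / Real.Gamma (m - n + 1 + j) =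
      Real.exp (logGamma (m - n + 1 - p / n + j) - logGamma (m - n + 1 + j)) := by
    intro j _
    rw [Real.exp_sub, hexp (by linarith [j.cast_nonneg (α := ℝ)]),
      hexp (by linarith [j.cast_nonneg (α := ℝ)])]
  rw [mu0, logMu0, prod_congr rfl hprod, Real.exp_add, Real.exp_sum, Real.exp_sub, Real.exp_sub,
    hexp (by linarith [p.cast_nonneg (α := ℝ)]), hexp (by linarith), Real.exp_nat_mul,
    Real.exp_log hn0, div_div, mul_comm (Real.Gamma (m * n - p))]

theorem fwdDiff_iter_logMu0 (n m k : ℕ) :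
    (Δ_[1])^[k + 1] (logMu0 n m) 0 =
      ∑ j ∈ range n, (Δ_[-(n : ℝ)⁻¹])^[k + 1] logGamma (m - n + 1 + j) -
        (Δ_[-1])^[k + 1] logGamma (m * n) - if k = 0 then Real.log n else 0 := by
  have hfirst : Δ_[1] (logMu0 n m) =
      ∑ j ∈ range n, (fun p : ℕ ↦ Δ_[-(n : ℝ)⁻¹] logGamma (m - n + 1 + j + p • -(n : ℝ)⁻¹)) +
        ((-1 : ℝ) • (fun p : ℕ ↦ Δ_[-1] logGamma (m * n + p • (-1 : ℝ))) +
          fun _ ↦ -Real.log n) := by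
    ext p
    simp only [fwdDiff, logMu0, Pi.add_apply, Pi.smul_apply, Finset.sum_apply,
      sum_sub_distrib, smul_eq_mul, nsmul_eq_mul]
    push_cast
    ring_nf
  rw [Function.iterate_succ_apply, hfirst, fwdDiff_iter_add, fwdDiff_iter_add,
    fwdDiff_iter_finsetSum, fwdDiff_iter_const_smul, fwdDiff_iter_const]
  simp only [Pi.add_apply, Pi.smul_apply, Finset.sum_apply, fwdDiff_iter_comp_add_nsmul, zero_smul,
    add_zero, Function.iterate_succ_apply, smul_eq_mul]
  split_ifs <;> ring

/-- The value of `Δᵏ⁺¹ (logMu0 n m) 0` after replacing `Δᵏ⁺¹ log Γ` by `stirlingDeriv (k + 1)` and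
telescoping the sum over `j`. The arguments, exact up to bounded errors, are shifted by `s` and `r`
so that suitable shifts give a lower and an upper bound. -/
noncomputable def logMu0DiffApprox (k n m : ℕ) (s r : ℝ) : ℝ :=
  (n : ℝ)⁻¹ ^ (k + 1) * (stirlingDeriv k (m - n + s) - stirlingDeriv k (m + s)) -
    stirlingDeriv (k + 1) (m * n + r) - if k = 0 then Real.log n else 0

theorem fwdDiff_iter_logMu0_mem_Icc (k : ℕ) {n m : ℕ} (hn : 0 < n) (hm : (k + 2 : ℝ) < m - n) :
    (Δ_[1])^[k + 1] (logMu0 n m) 0 ∈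
      Set.Icc (logMu0DiffApprox k n m 1 (-(k + 2))) (logMu0DiffApprox k n m (-(k + 2)) 0) := by
  have hn1 : (1 : ℝ) ≤ n := by exact_mod_cast hn
  have hmn : (k + 2 : ℝ) < m * n := by nlinarith [k.cast_nonneg (α := ℝ)]
  have hlin := fwdDiff_iter_logGamma_mem_Icc k one_pos (x := m * n) (by linarith)
  have hsum := sum_fwdDiff_iter_logGamma_mem_Icc k n (h := (n : ℝ)⁻¹) (by positivity)
    (inv_le_one_of_one_le₀ hn1) hm
  rw [one_pow, one_mul, one_mul, mul_one, sub_sub, add_assoc, one_add_one_eq_two] at hlin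
  rw [show (m - n + 1 + n : ℝ) = m + 1 by ring,
    show (m - n - (k + 2) + n : ℝ) = m - (k + 2) by ring] at hsum
  rw [fwdDiff_iter_logMu0, logMu0DiffApprox, logMu0DiffApprox, add_zero, ← sub_eq_add_neg,
    ← sub_eq_add_neg, ← sub_eq_add_neg]
  constructor <;> linarith [hlin.1, hlin.2, hsum.1, hsum.2]

theorem pow_mul_stirlingDeriv_sub (k : ℕ) {N b e : ℝ} (hN : 0 < N) (hb : 1 < b) (he : 0 < e) :
    (N ^ 2) ^ k * (N⁻¹ ^ (k + 1) * (stirlingDeriv k (N * (b - 1)) - stirlingDeriv k (N * b)) -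
        stirlingDeriv (k + 1) (N ^ 2 * e) - if k = 0 then Real.log N else 0) =
      stirlingDeriv k (b - 1) - stirlingDeriv k b - stirlingDeriv (k + 1) e := by
  have hb1 : b - 1 ≠ 0 := by linarith
  have hb0 : b ≠ 0 := by linarith
  match k with
  | 0 =>
    simp only [stirlingDeriv, ↓reduceIte, Real.log_mul hN.ne' hb1, Real.log_mul hN.ne' hb0,
      Real.log_mul (pow_ne_zero 2 hN.ne') he.ne', Real.log_pow, zero_add, pow_zero, pow_one,
      one_mul]
    field_simp
    ring
  | 1 =>
    simp only [stirlingDeriv, Real.log_mul hN.ne' hb1, Real.log_mul hN.ne' hb0, one_ne_zero,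
      ↓reduceIte, inv_pow, zero_add, pow_one, Nat.factorial_zero, Nat.cast_one, sub_zero]
    field_simp
    ring
  | k + 2 =>
    simp only [stirlingDeriv, mul_pow, inv_pow, Nat.add_eq_zero_iff, OfNat.ofNat_ne_zero, and_false,
      ↓reduceIte, sub_zero]
    field_simp
    ring

section Limits

variable {ι : Type*} {l : Filter ι} {n m : ι → ℕ} {c : ℝ}

theorem tendsto_cast_add_div (hn : Tendsto (fun t ↦ (n t : ℝ)) l atTop) (hc : c ≠ 0)
    (hratio : Tendsto (fun t ↦ (n t : ℝ) / m t) l (𝓝 c)) (s : ℝ) :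
    Tendsto (fun t ↦ (m t + s) / (n t : ℝ)) l (𝓝 c⁻¹) := by
  simpa [add_div] using (hratio.inv₀ hc).add (hn.const_div_atTop s)

theorem tendsto_cast_sub_cast_atTop (hn : Tendsto (fun t ↦ (n t : ℝ)) l atTop)
    (hc : c ∈ Set.Ioo (0 : ℝ) 1) (hratio : Tendsto (fun t ↦ (n t : ℝ) / m t) l (𝓝 c)) :
    Tendsto (fun t ↦ (m t : ℝ) - n t) l atTop := by
  have hgap : 0 < c⁻¹ - 1 := sub_pos.2 ((one_lt_inv₀ hc.1).2 hc.2)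
  refine (((tendsto_cast_add_div hn hc.1.ne' hratio 0).sub_const 1).pos_mul_atTop hgap
    hn).congr' ?_
  filter_upwards [hn.eventually_gt_atTop 0] with t ht
  field_simp
  ring

/-- The limit of `n²ᵏ Δᵏ⁺¹ (logMu0 n m) 0` as `n → ∞` and `n / m → c`. -/
noncomputable def logMu0DiffLimit (k : ℕ) (c : ℝ) : ℝ :=
  stirlingDeriv k ((1 - c) / c) - stirlingDeriv k c⁻¹ - stirlingDeriv (k + 1) c⁻¹

theorem tendsto_logMu0DiffApprox (hn : Tendsto (fun t ↦ (n t : ℝ)) l atTop)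
    (hc : c ∈ Set.Ioo (0 : ℝ) 1) (hratio : Tendsto (fun t ↦ (n t : ℝ) / m t) l (𝓝 c))
    (k : ℕ) (s r : ℝ) :
    Tendsto (fun t ↦ ((n t : ℝ) ^ 2) ^ k * logMu0DiffApprox k (n t) (m t) s r) l
      (𝓝 (logMu0DiffLimit k c)) := by
  have hinv : 1 < c⁻¹ := (one_lt_inv₀ hc.1).2 hc.2
  have hb := tendsto_cast_add_div hn hc.1.ne' hratio s
  have he : Tendsto (fun t ↦ (m t : ℝ) / n t + r / (n t : ℝ) ^ 2) l (𝓝 c⁻¹) := by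
    simpa using (hratio.inv₀ hc.1.ne').add
      (((tendsto_pow_atTop two_ne_zero).comp hn).const_div_atTop r)
  have hcont : ∀ i {x : ℝ}, 0 < x → ContinuousAt (stirlingDeriv i) x := fun i _ hx ↦
    (hasDerivAt_stirlingDeriv i hx).continuousAt
  rw [logMu0DiffLimit, show (1 - c) / c = c⁻¹ - 1 by rw [sub_div, div_self hc.1.ne', one_div]]
  refine ((((hcont k (sub_pos.2 hinv)).tendsto.comp (hb.sub_const 1)).sub
    ((hcont k (one_pos.trans hinv)).tendsto.comp hb)).sub
      ((hcont (k + 1) (one_pos.trans hinv)).tendsto.comp he)).congr' ?_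
  filter_upwards [hn.eventually_gt_atTop 0, hb.eventually_const_lt hinv,
    he.eventually_const_lt (one_pos.trans hinv)] with t hN hb1 he0
  simp only [Function.comp_apply, ← pow_mul_stirlingDeriv_sub k hN hb1 he0, logMu0DiffApprox]
  congr 5 <;> field_simp
  ring_nf

theorem tendsto_fwdDiff_iter_logMu0 (hn : Tendsto (fun t ↦ (n t : ℝ)) l atTop)
    (hc : c ∈ Set.Ioo (0 : ℝ) 1) (hratio : Tendsto (fun t ↦ (n t : ℝ) / m t) l (𝓝 c)) (k : ℕ) :
    Tendsto (fun t ↦ ((n t : ℝ) ^ 2) ^ k * (Δ_[1])^[k + 1] (logMu0 (n t) (m t)) 0) l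
      (𝓝 (logMu0DiffLimit k c)) := by
  have hbounds : ∀ᶠ t in l, (Δ_[1])^[k + 1] (logMu0 (n t) (m t)) 0 ∈
      Set.Icc (logMu0DiffApprox k (n t) (m t) 1 (-(k + 2)))
        (logMu0DiffApprox k (n t) (m t) (-(k + 2)) 0) := by
    filter_upwards [hn.eventually_gt_atTop 0,
      (tendsto_cast_sub_cast_atTop hn hc hratio).eventually_gt_atTop (k + 2 : ℝ)] with t hN hgap
    exact fwdDiff_iter_logMu0_mem_Icc k (by exact_mod_cast hN) hgap
  refine tendsto_of_tendsto_of_tendsto_of_le_of_le'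
    (tendsto_logMu0DiffApprox hn hc hratio k 1 (-(k + 2)))
    (tendsto_logMu0DiffApprox hn hc hratio k (-(k + 2)) 0) ?_ ?_ <;>
    filter_upwards [hbounds] with t ht <;> gcongr
  exacts [ht.1, ht.2]

end Limits

end LogMoment

section FourthCumulant

open scoped fwdDiff

/-- The fourth cumulant of a sequence `μ` of moments with `μ 0 = 1`. -/
def fourthCumulant (μ : ℕ → ℝ) : ℝ :=
  μ 4 - 4 * μ 3 * μ 1 - 3 * μ 2 ^ 2 + 12 * μ 2 * μ 1 ^ 2 - 6 * μ 1 ^ 4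

/-- The fourth cumulant of the moments `exp (f p)`, without the factor `exp (Δ f 0) ^ 4`, as a
function of the exponentials `b`, `x`, `y` of the second, third and fourth differences of `f` at
`0` (see `fourthCumulant_exp`). -/
def reducedFourthCumulant (b x y : ℝ) : ℝ :=
  b ^ 6 * x ^ 4 * y - 4 * b ^ 3 * x - 3 * b ^ 2 + 12 * b - 6

theorem fourthCumulant_exp {f : ℕ → ℝ} (hf : f 0 = 0) :
    fourthCumulant (fun p ↦ Real.exp (f p)) =
      Real.exp ((Δ_[1])^[1] f 0) ^ 4 * reducedFourthCumulant (Real.exp ((Δ_[1])^[2] f 0))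
        (Real.exp ((Δ_[1])^[3] f 0)) (Real.exp ((Δ_[1])^[4] f 0)) := by
  have hnewton : ∀ p : ℕ, f p = ∑ k ∈ range (p + 1), p.choose k * (Δ_[1])^[k] f 0 := fun p ↦ by
    simpa using shift_eq_sum_fwdDiff_iter 1 f p 0
  have hpow : ∀ p : ℕ, Real.exp (f p) =
      ∏ k ∈ range (p + 1), Real.exp ((Δ_[1])^[k] f 0) ^ p.choose k := fun p ↦ by
    simp only [hnewton p, Real.exp_sum, Real.exp_nat_mul]
  have hbase : Real.exp ((Δ_[1])^[0] f 0) = 1 := by simp [hf]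
  simp only [fourthCumulant, reducedFourthCumulant, hpow, prod_range_succ, range_zero, prod_empty,
    hbase, Nat.choose]
  ring

variable {ι : Type*} {l : Filter ι} {r : ι → ℝ}

theorem tendsto_zero_of_tendsto_mul_atTop {d : ι → ℝ} {a : ℝ} (hr : Tendsto r l atTop)
    (hrd : Tendsto (fun t ↦ r t * d t) l (𝓝 a)) : Tendsto d l (𝓝 0) := by
  refine (hrd.div_atTop hr).congr' ?_
  filter_upwards [hr.eventually_ne_atTop 0] with t ht
  exact mul_div_cancel_left₀ _ ht

theorem tendsto_mul_exp_sub_one {d : ι → ℝ} {a : ℝ} (hr : Tendsto r l atTop)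
    (hrd : Tendsto (fun t ↦ r t * d t) l (𝓝 a)) :
    Tendsto (fun t ↦ r t * (Real.exp (d t) - 1)) l (𝓝 a) := by
  have hslope : Tendsto (fun t ↦ dslope Real.exp 0 (d t)) l (𝓝 1) := by
    have hcont := continuousAt_dslope_same.2 (Real.differentiableAt_exp (x := 0))
    simpa [dslope_same, Function.comp_def] using
      hcont.tendsto.comp (tendsto_zero_of_tendsto_mul_atTop hr hrd)
  refine (mul_one a ▸ hrd.mul hslope).congr fun t ↦ ?_
  simpa [mul_assoc] using congrArg (r t * ·) (sub_smul_dslope Real.exp 0 (d t))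

theorem tendsto_pow_three_mul_reducedFourthCumulant {b x y : ι → ℝ} {β ξ η : ℝ}
    (hr : Tendsto r l atTop) (hb : Tendsto (fun t ↦ r t * (b t - 1)) l (𝓝 β))
    (hx : Tendsto (fun t ↦ r t ^ 2 * (x t - 1)) l (𝓝 ξ))
    (hy : Tendsto (fun t ↦ r t ^ 3 * (y t - 1)) l (𝓝 η)) :
    Tendsto (fun t ↦ r t ^ 3 * reducedFourthCumulant (b t) (x t) (y t)) l
      (𝓝 (16 * β ^ 3 + 12 * β * ξ + η)) := by
  have hb_one : Tendsto b l (𝓝 1) :=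
    tendsto_sub_nhds_zero_iff.1 (tendsto_zero_of_tendsto_mul_atTop hr hb)
  have hrx : Tendsto (fun t ↦ r t * (x t - 1)) l (𝓝 0) :=
    tendsto_zero_of_tendsto_mul_atTop hr (hx.congr fun t ↦ by ring)
  have hx_one : Tendsto x l (𝓝 1) :=
    tendsto_sub_nhds_zero_iff.1 (tendsto_zero_of_tendsto_mul_atTop hr hrx)
  have hcubic : Tendsto (fun t ↦ (r t * (b t - 1)) ^ 3 * (b t ^ 3 + 3 * b t ^ 2 + 6 * b t + 6))
      l (𝓝 (β ^ 3 * (1 ^ 3 + 3 * 1 ^ 2 + 6 * 1 + 6))) := by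
    apply_rules [tendsto_const_nhds, Tendsto.pow, Tendsto.add, Tendsto.mul]
  have hmixed : Tendsto (fun t ↦ r t ^ 2 * (x t - 1) *
      (4 * b t ^ 3 * (r t * (b t - 1)) * (b t ^ 2 + b t + 1) +
        b t ^ 6 * (r t * (x t - 1)) * (x t ^ 2 + 2 * x t + 3)))
      l (𝓝 (ξ * (4 * 1 ^ 3 * β * (1 ^ 2 + 1 + 1) + 1 ^ 6 * 0 * (1 ^ 2 + 2 * 1 + 3)))) := by
    apply_rules [tendsto_const_nhds, Tendsto.pow, Tendsto.add, Tendsto.mul]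
  have hlast : Tendsto (fun t ↦ b t ^ 6 * x t ^ 4 * (r t ^ 3 * (y t - 1)))
      l (𝓝 (1 ^ 6 * 1 ^ 4 * η)) :=
    ((hb_one.pow 6).mul (hx_one.pow 4)).mul hy
  convert (hcubic.add hmixed).add hlast using 2 with t
  · rw [reducedFourthCumulant]
    ring
  · ring

theorem tendsto_pow_three_mul_fourthCumulant_exp {f : ι → ℕ → ℝ} {a : ℕ → ℝ}
    (hf : ∀ t, f t 0 = 0) (hr : Tendsto r l atTop)
    (hdiff : ∀ k ≤ 3, Tendsto (fun t ↦ r t ^ k * (Δ_[1])^[k + 1] (f t) 0) l (𝓝 (a k))) :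
    Tendsto (fun t ↦ r t ^ 3 * fourthCumulant fun p ↦ Real.exp (f t p)) l
      (𝓝 (Real.exp (a 0) ^ 4 * (16 * a 1 ^ 3 + 12 * a 1 * a 2 + a 3))) := by
  have hfirst : Tendsto (fun t ↦ Real.exp ((Δ_[1])^[1] (f t) 0)) l (𝓝 (Real.exp (a 0))) :=
    (Real.continuous_exp.tendsto _).comp (by simpa using hdiff 0 (by simp))
  have hreduced := tendsto_pow_three_mul_reducedFourthCumulant hr
    (tendsto_mul_exp_sub_one hr (by simpa only [pow_one] using hdiff 1 (by simp)))
    (tendsto_mul_exp_sub_one ((tendsto_pow_atTop two_ne_zero).comp hr) (hdiff 2 (by simp)))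
    (tendsto_mul_exp_sub_one ((tendsto_pow_atTop three_ne_zero).comp hr) (hdiff 3 le_rfl))
  refine ((hfirst.pow 4).mul hreduced).congr fun t ↦ ?_
  rw [fourthCumulant_exp (hf t)]
  exact mul_left_comm _ _ _

end FourthCumulant

section LimitValues

variable {c : ℝ}

theorem logMu0DiffLimit_zero (hc : c ∈ Set.Ioo (0 : ℝ) 1) :
    logMu0DiffLimit 0 c = 1 + (1 - c) / c * Real.log (1 - c) := by
  have hc0 : c ≠ 0 := hc.1.ne'
  simp only [logMu0DiffLimit, stirlingDeriv, Real.log_inv,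
    Real.log_div (sub_pos.2 hc.2).ne' hc0]
  field_simp
  ring

theorem logMu0DiffLimit_one (hc : c ∈ Set.Ioo (0 : ℝ) 1) :
    logMu0DiffLimit 1 c = -Real.log (1 - c) - c := by
  have hc0 : c ≠ 0 := hc.1.ne'
  simp only [logMu0DiffLimit, stirlingDeriv, Real.log_inv,
    Real.log_div (sub_pos.2 hc.2).ne' hc0]
  simp

theorem logMu0DiffLimit_two : logMu0DiffLimit 2 c = c / (1 - c) - c - c ^ 2 := by
  simp [logMu0DiffLimit, stirlingDeriv]

theorem logMu0DiffLimit_three : logMu0DiffLimit 3 c = (c / (1 - c)) ^ 2 - c ^ 2 - 2 * c ^ 3 := by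
  simp [logMu0DiffLimit, stirlingDeriv, div_pow]

theorem exp_logMu0DiffLimit_zero_pow_four (hc : c ∈ Set.Ioo (0 : ℝ) 1) :
    Real.exp (logMu0DiffLimit 0 c) ^ 4 =
      Real.exp 1 ^ 4 * (1 - c) ^ (4 * (1 - c) / c - 2) * (1 - c) ^ 2 := by
  have hpos : 0 < 1 - c := sub_pos.2 hc.2
  rw [mul_assoc, ← Real.rpow_add_natCast hpos.ne', Real.rpow_def_of_pos hpos,
    logMu0DiffLimit_zero hc, Real.exp_add, mul_pow, ← Real.exp_nat_mul (_ * _)]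
  congr 2
  push_cast
  ring

theorem logMu0DiffLimit_combination (hc : c ∈ Set.Ioo (0 : ℝ) 1) :
    (1 - c) ^ 2 * (16 * logMu0DiffLimit 1 c ^ 3 +
        12 * logMu0DiffLimit 1 c * logMu0DiffLimit 2 c + logMu0DiffLimit 3 c) =
      -(c ^ 3 * (16 + c * (6 * c - 23)) - 12 * (1 - c) * c ^ 2 * (3 * c - 4) * Real.log (1 - c)
        + 48 * c * (1 - c) ^ 2 * Real.log (1 - c) ^ 2
        + 16 * (1 - c) ^ 2 * Real.log (1 - c) ^ 3) := by
  have hpos : 1 - c ≠ 0 := (sub_pos.2 hc.2).ne'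
  rw [logMu0DiffLimit_one hc, logMu0DiffLimit_two, logMu0DiffLimit_three]
  field_simp
  ring

end LimitValues

theorem mu0_fourth_cumulant_tendsto_general {ι : Type*} {l : Filter ι} {n m : ι → ℕ}
    (hn : Tendsto (fun t ↦ (n t : ℝ)) l atTop) {c : ℝ} (hc : c ∈ Set.Ioo (0 : ℝ) 1)
    (hratio : Tendsto (fun t ↦ (n t : ℝ) / m t) l (𝓝 c)) :
    Tendsto
      (fun t ↦ (n t : ℝ) ^ 6 *
        (mu0 4 (n t) (m t) - 4 * mu0 3 (n t) (m t) * mu0 1 (n t) (m t)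
          - 3 * (mu0 2 (n t) (m t)) ^ 2
          + 12 * mu0 2 (n t) (m t) * (mu0 1 (n t) (m t)) ^ 2
          - 6 * (mu0 1 (n t) (m t)) ^ 4))
      l
      (𝓝 (-(Real.exp 1 ^ 4) * (1 - c) ^ (4 * (1 - c) / c - 2) *
        (c ^ 3 * (16 + c * (6 * c - 23)) - 12 * (1 - c) * c ^ 2 * (3 * c - 4) * Real.log (1 - c)
          + 48 * c * (1 - c) ^ 2 * (Real.log (1 - c)) ^ 2
          + 16 * (1 - c) ^ 2 * (Real.log (1 - c)) ^ 3))) := by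
  have hcumulant := tendsto_pow_three_mul_fourthCumulant_exp
    (f := fun t ↦ logMu0 (n t) (m t)) (fun t ↦ logMu0_zero _ _)
    ((tendsto_pow_atTop two_ne_zero).comp hn) fun k _ ↦ tendsto_fwdDiff_iter_logMu0 hn hc hratio k
  rw [exp_logMu0DiffLimit_zero_pow_four hc, mul_assoc, logMu0DiffLimit_combination hc, mul_neg,
    ← neg_mul, ← neg_mul] at hcumulant
  refine hcumulant.congr' ?_
  filter_upwards [hn.eventually_ge_atTop 1,
    (tendsto_cast_sub_cast_atTop hn hc hratio).eventually_gt_atTop 3] with t hn1 hgap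
  have hmoment : ∀ p ≤ 4, Real.exp (logMu0 (n t) (m t) p) = mu0 p (n t) (m t) := fun p hp ↦ by
    have hp4 : (p : ℝ) ≤ 4 := by exact_mod_cast hp
    exact (mu0_eq_exp_logMu0 (by exact_mod_cast hn1) (by nlinarith)).symm
  simp [fourthCumulant, hmoment, ← pow_mul]

/-- limit of `n⁶` times the fourth cumulant of the GLRT statistic under `H₀`
when `n → ∞` and `n/m → c̄ ∈ (0,1)`. -/
theorem mu0_fourth_cumulant_tendsto (n m : ℕ → ℕ) (hn0 : ∀ t, 0 < n t)
    (hnm : ∀ t, n t ≤ m t)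
    (hn : Tendsto (fun t => (n t : ℝ)) atTop atTop)
    (c : ℝ) (hc : c ∈ Set.Ioo (0 : ℝ) 1)
    (hratio : Tendsto (fun t => (n t : ℝ) / (m t : ℝ)) atTop (𝓝 c)) :
    Tendsto
      (fun t => (n t : ℝ) ^ 6 *
        (mu0 4 (n t) (m t) - 4 * mu0 3 (n t) (m t) * mu0 1 (n t) (m t)
          - 3 * (mu0 2 (n t) (m t)) ^ 2
          + 12 * mu0 2 (n t) (m t) * (mu0 1 (n t) (m t)) ^ 2
          - 6 * (mu0 1 (n t) (m t)) ^ 4))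
      atTop
      (𝓝 (-(Real.exp 1 ^ 4) * (1 - c) ^ (4 * (1 - c) / c - 2) *
        (c ^ 3 * (16 + c * (6 * c - 23)) - 12 * (1 - c) * c ^ 2 * (3 * c - 4) * Real.log (1 - c)
          + 48 * c * (1 - c) ^ 2 * (Real.log (1 - c)) ^ 2
          + 16 * (1 - c) ^ 2 * (Real.log (1 - c)) ^ 3))) :=
  mu0_fourth_cumulant_tendsto_general hn hc hratio
end

section
/- Fix an integer p ≥ 3. For each integer n > p, let κ(p,n) be the p-th cumulant associated with the moment sequence q ↦ μ0(q,n,n) (defined for 1 ≤ q ≤ p since p < n). Then lim_{n→∞} n^p·κ(p,n) = e^p·(p−1)!·ζ(p−1), where ζ is the Riemann zeta function. -/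
open Finset Filter Topology

/-- Cumulants associated with a sequence of moments `μ`:
`κ(1) = μ(1)` and `κ(p) = μ(p) − Σ_{ℓ=1}^{p−1} C(p−1,ℓ−1)·κ(ℓ)·μ(p−ℓ)` for `p ≥ 2`. -/
noncomputable def cumulant (μ : ℕ → ℝ) : ℕ → ℝ
  | 0 => 0
  | 1 => μ 1
  | (p + 2) =>
      μ (p + 2) -
        ∑ l ∈ (Finset.range (p + 1)).attach,
          (Nat.choose (p + 1) l.1 : ℝ) * cumulant μ (l.1 + 1) * μ (p + 1 - l.1)
termination_by p => p
decreasing_by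
  have h := Finset.mem_range.mp l.2
  omega

/-- The Riemann zeta value `ζ(k) = Σ_{i≥1} 1/i^k` for a natural argument. -/
noncomputable def zetaNat (k : ℕ) : ℝ := ∑' i : ℕ, 1 / ((i : ℝ) + 1) ^ k

/-! Let `d k` be the `k`-th forward difference of `log μ` at `0`. Newton interpolation gives
`μ q = μ 1 ^ q * ∏ exp (d #e)`, where `e` runs over the subsets with at least two elements of a
`q`-element set. Writing `exp (d #e) = 1 + w e` and expanding turns the moments into sums over
hypergraphs, so that the cumulant `κ p` is `μ 1 ^ p` times the sum of `∏ w e` over the *connected*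
hypergraphs on `p` vertices. If `n ^ (k - 1 / 2) * d k → 0` for `2 ≤ k ≤ p`, every connected
hypergraph but the one with a single edge is `o(n ^ (-p))`: it has at least two edges, and
`∑ (#e - 1) ≥ p - 1`. Hence `n ^ p * κ p` behaves like `μ 1 ^ p * n ^ p * d p`.

For the moments `mu0 q n n`, Stirling's formula yields `μ 1 → e`, while Euler's product for `Γ`
expresses `-d k`, up to a negligible term from `Γ (n ^ 2 - q)`, as the sum over `m ≥ 1` of `min n m`
times the `k`-th difference of `i ↦ log (1 - i / (n * m))`. The latter is asymptotic to
`-(k - 1)! / (n * m) ^ k`, so `n ^ k * d k → (k - 1)! * ∑ m ^ (1 - k)` for `k ≥ 3`. For `k = 2` the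
series diverges, but only logarithmically, which costs less than the half power allowed above. -/

section Hypergraph

variable {α : Type*} {S T : Finset α} {H : Finset (Finset α)}

/-- The possible edges of a hypergraph on the vertex set `S`: the subsets with at least two
elements. -/
def hyperedges (S : Finset α) : Finset (Finset α) := {e ∈ S.powerset | 2 ≤ #e}

/-- No edge of the hypergraph `H` leaves `T`, i.e. `T` is a union of connected components. -/
def IsSaturated (H : Finset (Finset α)) (T : Finset α) : Prop := ∀ e ∈ H, e ⊆ T ∨ Disjoint e T

/-- The hypergraph `H` connects the vertex set `S`. It is phrased through saturated sets, so that
no paths are needed; `H` is not required to live on `S`. -/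
def IsConnectedOn (H : Finset (Finset α)) (S : Finset α) : Prop :=
  ∀ T ⊆ S, T.Nonempty → IsSaturated H T → T = S

open Classical in
/-- The connected hypergraphs with vertex set `S`, over which the Mayer expansion of a cumulant
runs. -/
noncomputable def connectedHypergraphs (S : Finset α) : Finset (Finset (Finset α)) :=
  {H ∈ (hyperedges S).powerset | IsConnectedOn H S}

open Classical in
/-- The connected component of the vertex `v` in the hypergraph `H` on `S`: the smallest saturated
set containing `v`. -/
noncomputable def component (H : Finset (Finset α)) (S : Finset α) (v : α) : Finset α :=
  {u ∈ S | ∀ T, v ∈ T → IsSaturated H T → u ∈ T}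

lemma mem_hyperedges {e : Finset α} : e ∈ hyperedges S ↔ e ⊆ S ∧ 2 ≤ #e := by
  simp [hyperedges]

lemma mem_connectedHypergraphs :
    H ∈ connectedHypergraphs S ↔ H ⊆ hyperedges S ∧ IsConnectedOn H S := by
  simp [connectedHypergraphs]

lemma mem_component_self {v : α} (hv : v ∈ S) : v ∈ component H S v := by
  simp +contextual [component, hv]

lemma component_subset_of_isSaturated {v : α} (hv : v ∈ T) (hT : IsSaturated H T) :
    component H S v ⊆ T :=
  by classical exact fun _ hu => (mem_filter.mp hu).2 T hv hT

lemma isSaturated_component (hH : H ⊆ hyperedges S) (v : α) :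
    IsSaturated H (component H S v) := by
  classical
  refine fun e he => or_iff_not_imp_right.mpr fun hmeet x hx => ?_
  obtain ⟨u, hue, hu⟩ := not_disjoint_iff.mp hmeet
  refine mem_filter.mpr ⟨(mem_hyperedges.mp (hH he)).1 hx, fun T hv hT => ?_⟩
  have huT : u ∈ T := (mem_filter.mp hu).2 T hv hT
  exact ((hT e he).resolve_right (not_disjoint_iff.mpr ⟨u, hue, huT⟩)) hx

lemma singleton_mem_connectedHypergraphs (hS : 2 ≤ #S) : {S} ∈ connectedHypergraphs S := by
  refine mem_connectedHypergraphs.mpr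
    ⟨by simp [mem_hyperedges, hS], fun T hTS hT hsat => ?_⟩
  refine hTS.antisymm ((hsat S (mem_singleton_self S)).resolve_right fun hdisj => ?_)
  obtain ⟨x, hx⟩ := hT
  exact disjoint_left.mp hdisj (hTS hx) hx

lemma exists_crossing_of_isConnectedOn (hconn : IsConnectedOn H S) (hTS : T ⊂ S)
    (hT : T.Nonempty) : ∃ e ∈ H, ¬ e ⊆ T ∧ ¬ Disjoint e T := by
  by_contra! h
  exact hTS.ne (hconn T hTS.subset hT fun e he => or_iff_not_imp_left.mpr (h e he))

/-- Grow a spanned set of vertices by one crossing edge `e` at a time: each adds at most `#e - 1`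
vertices. -/
theorem card_le_one_add_sum_of_isConnectedOn (hS : S.Nonempty) (hconn : IsConnectedOn H S)
    (hH : ∀ e ∈ H, e ⊆ S) : #S ≤ 1 + ∑ e ∈ H, (#e - 1) := by
  classical
  obtain ⟨v, hv⟩ := hS
  let spanned := {T ∈ S.powerset | T.Nonempty ∧ #T ≤ 1 + ∑ e ∈ H with e ⊆ T, (#e - 1)}
  have hspanned : spanned.Nonempty := ⟨{v}, by simp [spanned, hv]⟩
  obtain ⟨T, hT, hmax⟩ := exists_max_image spanned card hspanned
  obtain ⟨hTS, hTne, hTcard⟩ : T ⊆ S ∧ T.Nonempty ∧ _ := by simpa [spanned] using hT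
  rcases hTS.eq_or_ssubset with rfl | hss
  · rwa [filter_true_of_mem hH] at hTcard
  obtain ⟨e, he, heT, hmeet⟩ := exists_crossing_of_isConnectedOn hconn hss hTne
  have hgrow : #T < #(T ∪ e) :=
    card_lt_card (subset_union_left.ssubset_of_not_subset fun h => heT (subset_union_right.trans h))
  refine absurd (hmax (T ∪ e) ?_) hgrow.not_ge
  have hsum : ∑ f ∈ H with f ⊆ T, (#f - 1) + (#e - 1) ≤ ∑ f ∈ H with f ⊆ T ∪ e, (#f - 1) := by
    calc _ = ∑ f ∈ insert e {f ∈ H | f ⊆ T}, (#f - 1) := by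
          rw [sum_insert (by simp [heT]), add_comm]
      _ ≤ _ := sum_le_sum_of_subset (insert_subset (by simp [he])
          (monotone_filter_right H fun f _ hf => hf.trans subset_union_left))
  have hcard := card_union_add_card_inter T e
  have hinter := card_pos.mpr (not_disjoint_iff_nonempty_inter.mp fun h => hmeet h.symm)
  exact mem_filter.mpr ⟨mem_powerset.mpr (union_subset hTS (hH e he)),
    hTne.mono subset_union_left, by omega⟩

/-- This is why only the single edge `S`, of weight `2 * #S - 1`, survives in the limit of the Mayer
expansion. -/
theorem two_mul_card_le_sum_of_mem_connectedHypergraphs (hS : 2 ≤ #S)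
    (hH : H ∈ connectedHypergraphs S) (hne : H ≠ {S}) : 2 * #S ≤ ∑ e ∈ H, (2 * #e - 1) := by
  obtain ⟨hHS, hconn⟩ := mem_connectedHypergraphs.mp hH
  have hedge : ∀ e ∈ H, e ⊆ S ∧ 2 ≤ #e := fun e he => mem_hyperedges.mp (hHS he)
  have htree := card_le_one_add_sum_of_isConnectedOn (card_pos.mp (by omega)) hconn
    fun e he => (hedge e he).1
  have hsum : ∑ e ∈ H, (2 * #e - 1) = 2 * ∑ e ∈ H, (#e - 1) + #H := by
    rw [mul_sum, card_eq_sum_ones, ← sum_add_distrib]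
    exact sum_congr rfl fun e he => by have := (hedge e he).2; omega
  have hcard : 2 ≤ #H := by
    by_contra! hlt
    rcases (by omega : #H = 0 ∨ #H = 1) with h0 | h1
    · rw [card_eq_zero.mp h0, sum_empty] at htree
      omega
    · obtain ⟨e, rfl⟩ := card_eq_one.mp h1
      have heS := hedge e (mem_singleton_self e)
      rw [sum_singleton] at htree
      exact hne (by rw [eq_of_subset_of_card_le heS.1 (by omega)])
  omega

variable [DecidableEq α]

lemma isConnectedOn_component (hH : H ⊆ hyperedges S) {v : α} (hv : v ∈ S) :
    IsConnectedOn {e ∈ H | e ⊆ component H S v} (component H S v) := by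
  set K := component H S v
  have hK : IsSaturated H K := isSaturated_component hH v
  intro U hUK hU hsat
  have hsatH : IsSaturated H U := fun e he => (hK e he).elim
    (fun h => hsat e (mem_filter.mpr ⟨he, h⟩)) (fun h => .inr (h.mono_right hUK))
  by_cases hvU : v ∈ U
  · exact hUK.antisymm (component_subset_of_isSaturated hvU hsatH)
  · have hdiff : IsSaturated H (K \ U) := fun e he => by
      rcases hK e he with h | h
      · rcases hsatH e he with h' | h'
        · exact .inr (disjoint_sdiff.mono_left h')
        · exact .inl (subset_sdiff.mpr ⟨h, h'⟩)
      · exact .inr (h.mono_right sdiff_subset)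
    have hKU : K ⊆ K \ U := component_subset_of_isSaturated
      (mem_sdiff.mpr ⟨mem_component_self hv, hvU⟩) hdiff
    obtain ⟨u, hu⟩ := hU
    exact absurd hu (mem_sdiff.mp (hKU (hUK hu))).2

lemma component_eq_iff (hH : H ⊆ hyperedges S) {v : α} (hvT : v ∈ T) (hTS : T ⊆ S) :
    component H S v = T ↔ IsSaturated H T ∧ IsConnectedOn {e ∈ H | e ⊆ T} T := by
  constructor
  · rintro rfl
    exact ⟨isSaturated_component hH v, isConnectedOn_component hH (hTS hvT)⟩
  · rintro ⟨hsat, hconn⟩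
    exact hconn _ (component_subset_of_isSaturated hvT hsat) ⟨v, mem_component_self (hTS hvT)⟩
      fun e he => isSaturated_component hH v e (mem_filter.mp he).1

lemma union_subset_hyperedges {H₁ H₂ : Finset (Finset α)} (hTS : T ⊆ S)
    (h₁ : H₁ ⊆ hyperedges T) (h₂ : H₂ ⊆ hyperedges (S \ T)) : H₁ ∪ H₂ ⊆ hyperedges S := by
  refine union_subset (fun e he => ?_) fun e he => ?_
  · have := mem_hyperedges.mp (h₁ he)
    exact mem_hyperedges.mpr ⟨this.1.trans hTS, this.2⟩
  · have := mem_hyperedges.mp (h₂ he)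
    exact mem_hyperedges.mpr ⟨this.1.trans sdiff_subset, this.2⟩

lemma not_subset_of_mem_hyperedges_sdiff {e : Finset α} (he : e ∈ hyperedges (S \ T)) :
    ¬ e ⊆ T := by
  obtain ⟨hsub, hcard⟩ := mem_hyperedges.mp he
  obtain ⟨x, hx⟩ := card_pos.mp (by omega : 0 < #e)
  exact fun h => (mem_sdiff.mp (hsub hx)).2 (h hx)

lemma filter_subset_union_eq {H₁ H₂ : Finset (Finset α)} (h₁ : H₁ ⊆ hyperedges T)
    (h₂ : H₂ ⊆ hyperedges (S \ T)) : {e ∈ H₁ ∪ H₂ | e ⊆ T} = H₁ := by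
  rw [filter_union, filter_true_of_mem fun e he => (mem_hyperedges.mp (h₁ he)).1,
    filter_false_of_mem fun e he => not_subset_of_mem_hyperedges_sdiff (h₂ he), union_empty]

lemma filter_not_subset_union_eq {H₁ H₂ : Finset (Finset α)} (h₁ : H₁ ⊆ hyperedges T)
    (h₂ : H₂ ⊆ hyperedges (S \ T)) : {e ∈ H₁ ∪ H₂ | ¬ e ⊆ T} = H₂ := by
  rw [filter_union, filter_false_of_mem fun e he => not_not.mpr (mem_hyperedges.mp (h₁ he)).1,
    filter_true_of_mem fun e he => not_subset_of_mem_hyperedges_sdiff (h₂ he), empty_union]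

variable {R : Type*} [CommSemiring R] (w : Finset α → R)

lemma sum_component_eq (v : α) (hvT : v ∈ T) (hTS : T ⊆ S) :
    ∑ H ∈ (hyperedges S).powerset with component H S v = T, ∏ e ∈ H, w e =
      (∑ H ∈ connectedHypergraphs T, ∏ e ∈ H, w e) *
        ∑ H ∈ (hyperedges (S \ T)).powerset, ∏ e ∈ H, w e := by
  rw [sum_mul_sum, ← sum_product']
  refine sum_nbij' (fun H => ({e ∈ H | e ⊆ T}, {e ∈ H | ¬ e ⊆ T})) (fun P => P.1 ∪ P.2)
    ?_ ?_ ?_ ?_ ?_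
  · intro H hH
    obtain ⟨hH, hcomp⟩ := mem_filter.mp hH
    rw [mem_powerset] at hH
    obtain ⟨hsat, hconn⟩ := (component_eq_iff hH hvT hTS).mp hcomp
    refine mem_product.mpr ⟨mem_connectedHypergraphs.mpr ⟨fun e he => ?_, hconn⟩,
      mem_powerset.mpr fun e he => ?_⟩ <;> obtain ⟨heH, heT⟩ := mem_filter.mp he
    · exact mem_hyperedges.mpr ⟨heT, (mem_hyperedges.mp (hH heH)).2⟩
    · have := mem_hyperedges.mp (hH heH)
      exact mem_hyperedges.mpr
        ⟨subset_sdiff.mpr ⟨this.1, (hsat e heH).resolve_left heT⟩, this.2⟩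
  · rintro ⟨H₁, H₂⟩ hP
    obtain ⟨hH₁, h₂⟩ := mem_product.mp hP
    obtain ⟨h₁, hconn⟩ := mem_connectedHypergraphs.mp hH₁
    rw [mem_powerset] at h₂
    have hunion := union_subset_hyperedges hTS h₁ h₂
    refine mem_filter.mpr ⟨mem_powerset.mpr hunion, (component_eq_iff hunion hvT hTS).mpr
      ⟨fun e he => ?_, by rwa [filter_subset_union_eq h₁ h₂]⟩⟩
    refine (mem_union.mp he).imp (fun h => (mem_hyperedges.mp (h₁ h)).1) fun h => ?_
    exact disjoint_sdiff.symm.mono_left (mem_hyperedges.mp (h₂ h)).1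
  · exact fun H _ => filter_union_filter_not_eq _ H
  · rintro ⟨H₁, H₂⟩ hP
    obtain ⟨hH₁, h₂⟩ := mem_product.mp hP
    have h₁ := (mem_connectedHypergraphs.mp hH₁).1
    rw [mem_powerset] at h₂
    exact Prod.ext (filter_subset_union_eq h₁ h₂) (filter_not_subset_union_eq h₁ h₂)
  · exact fun H _ => (prod_filter_mul_prod_filter_not H (· ⊆ T) w).symm

theorem prod_hyperedges_one_add_eq_sum_component {v : α} (hv : v ∈ S) :
    ∏ e ∈ hyperedges S, (1 + w e) =
      ∑ T ∈ S.powerset with v ∈ T, (∑ H ∈ connectedHypergraphs T, ∏ e ∈ H, w e) *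
        ∏ e ∈ hyperedges (S \ T), (1 + w e) := by
  simp only [prod_one_add]
  have hmaps : ∀ H ∈ (hyperedges S).powerset, component H S v ∈ S.powerset.filter (v ∈ ·) :=
    fun H _ => by
      classical
      exact mem_filter.mpr ⟨mem_powerset.mpr (filter_subset _ S), mem_component_self hv⟩
  rw [← sum_fiberwise_of_maps_to hmaps]
  refine sum_congr rfl fun T hT => ?_
  obtain ⟨hTS, hvT⟩ := mem_filter.mp hT
  exact sum_component_eq w v hvT (mem_powerset.mp hTS)

end Hypergraph

section Cumulant

/-- The `k`-th forward difference at `0` of the logarithm of a sequence. -/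
noncomputable def logFwdDiff (μ : ℕ → ℝ) (k : ℕ) : ℝ := (fwdDiff 1)^[k] (fun q => Real.log (μ q)) 0

lemma cumulant_succ (μ : ℕ → ℝ) (m : ℕ) :
    cumulant μ (m + 1) = μ (m + 1) -
      ∑ l ∈ range m, (m.choose l : ℝ) * cumulant μ (l + 1) * μ (m - l) := by
  cases m with
  | zero => simp [cumulant]
  | succ m =>
    rw [cumulant, sum_attach (range (m + 1))
      fun l => ((m + 1).choose l : ℝ) * cumulant μ (l + 1) * μ (m + 1 - l)]

lemma sum_choose_smul_eq_add_sum_hyperedges {M : Type*} [AddCommMonoid M] (g : ℕ → M)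
    {α : Type*} (T : Finset α) :
    ∑ k ∈ range (#T + 1), (#T).choose k • g k = ∑ e ∈ hyperedges T, g #e + (g 0 + #T • g 1) := by
  have hsmall : ∑ e ∈ T.powerset with ¬ 2 ≤ #e, g #e = g 0 + #T • g 1 := by
    rw [sum_filter, sum_powerset_apply_card fun k => if ¬ 2 ≤ k then g k else 0]
    cases hT : #T with
    | zero => simp
    | succ q =>
      rw [sum_range_succ', sum_range_succ', sum_eq_zero fun k _ => by simp]
      simp [add_comm]
  rw [← sum_powerset_apply_card g, ← hsmall, hyperedges, sum_filter_add_sum_filter_not]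

/-- Exponentiated Newton interpolation of `log μ` at `0`. -/
theorem moment_card_eq_pow_mul_prod_hyperedges {μ : ℕ → ℝ} {α : Type*} {T : Finset α}
    (hμ0 : μ 0 = 1) (hμ : ∀ q ≤ #T, 0 < μ q) :
    μ #T = μ 1 ^ #T * ∏ e ∈ hyperedges T, Real.exp (logFwdDiff μ #e) := by
  rcases T.eq_empty_or_nonempty with rfl | hT
  · simp [hμ0, hyperedges, filter_singleton]
  have hμ1 : 0 < μ 1 := hμ 1 (card_pos.mpr hT)
  have hnewton : Real.log (μ #T) = ∑ k ∈ range (#T + 1), (#T).choose k • logFwdDiff μ k := by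
    simpa [logFwdDiff] using shift_eq_sum_fwdDiff_iter 1 (fun q => Real.log (μ q)) #T 0
  have h0 : logFwdDiff μ 0 = 0 := by simp [logFwdDiff, hμ0]
  have h1 : logFwdDiff μ 1 = Real.log (μ 1) := by simp [logFwdDiff, fwdDiff, hμ0]
  rw [sum_choose_smul_eq_add_sum_hyperedges, h0, h1, zero_add, nsmul_eq_mul] at hnewton
  rw [← Real.exp_log (hμ _ le_rfl), hnewton, Real.exp_add, Real.exp_nat_mul, Real.exp_log hμ1,
    Real.exp_sum, mul_comm]

variable {α : Type*} {S : Finset α}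

theorem sum_cumulant_card_mul_card_sdiff [DecidableEq α] {μ : ℕ → ℝ} (hμ : μ 0 = 1) {v : α}
    (hv : v ∈ S) :
    ∑ T ∈ S.powerset with v ∈ T, cumulant μ #T * μ #(S \ T) = μ #S := by
  obtain ⟨m, hm⟩ : ∃ m, #(S.erase v) = m := ⟨_, rfl⟩
  have hS : #S = m + 1 := by rw [← hm, card_erase_add_one hv]
  calc ∑ T ∈ S.powerset with v ∈ T, cumulant μ #T * μ #(S \ T)
      = ∑ T ∈ (S.erase v).powerset, cumulant μ (#T + 1) * μ (m - #T) := by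
        refine sum_nbij' (fun T => T.erase v) (fun T => insert v T) ?_ ?_ ?_ ?_ ?_
        · exact fun T hT => mem_powerset.mpr
            (erase_subset_erase v (mem_powerset.mp (mem_filter.mp hT).1))
        · refine fun T hT => mem_filter.mpr ⟨mem_powerset.mpr (insert_subset hv ?_),
            mem_insert_self v T⟩
          exact (mem_powerset.mp hT).trans (erase_subset v S)
        · exact fun T hT => insert_erase (mem_filter.mp hT).2
        · exact fun T hT => erase_insert fun h => notMem_erase v S (mem_powerset.mp hT h)
        · intro T hT
          obtain ⟨hTS, hvT⟩ := mem_filter.mp hT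
          have hcard := card_erase_add_one hvT
          rw [hcard, card_sdiff_of_subset (mem_powerset.mp hTS), hS, ← hcard,
            Nat.add_sub_add_right]
    _ = ∑ l ∈ range (m + 1), m.choose l • (cumulant μ (l + 1) * μ (m - l)) := by
        rw [sum_powerset_apply_card (fun l => cumulant μ (l + 1) * μ (m - l)), hm]
    _ = μ #S := by
        rw [sum_range_succ, hS, cumulant_succ μ m]
        simp [hμ, mul_assoc]

/-- The Mayer expansion: sorting hypergraphs by the connected component of a fixed vertex reproduces
the recursion for the cumulants. -/
theorem cumulant_card_eq_sum_connectedHypergraphs {μ : ℕ → ℝ} {a : ℝ} {w : Finset α → ℝ}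
    (hS : S.Nonempty) (hμ : ∀ T ⊆ S, μ #T = a ^ #T * ∏ e ∈ hyperedges T, (1 + w e)) :
    cumulant μ #S = a ^ #S * ∑ H ∈ connectedHypergraphs S, ∏ e ∈ H, w e := by
  classical
  induction S using Finset.strongInduction with
  | H S ih =>
    obtain ⟨v, hv⟩ := hS
    let Z : Finset α → ℝ := fun T => ∑ H ∈ connectedHypergraphs T, ∏ e ∈ H, w e
    have hμ0 : μ 0 = 1 := by simpa [hyperedges, filter_singleton] using hμ ∅ (empty_subset S)
    have hexpand : ∑ T ∈ S.powerset with v ∈ T, cumulant μ #T * μ #(S \ T) =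
        ∑ T ∈ S.powerset with v ∈ T, a ^ #T * Z T * μ #(S \ T) := by
      rw [sum_cumulant_card_mul_card_sdiff hμ0 hv, hμ S subset_rfl,
        prod_hyperedges_one_add_eq_sum_component w hv, mul_sum]
      refine sum_congr rfl fun T hT => ?_
      have hTS := mem_powerset.mp (mem_filter.mp hT).1
      rw [hμ (S \ T) sdiff_subset, ← card_sdiff_add_card_eq_card hTS, pow_add]
      ring
    have hSmem : S ∈ S.powerset.filter (v ∈ ·) := by simp [hv]
    rw [← add_sum_erase _ _ hSmem, ← add_sum_erase _ (fun T => a ^ #T * Z T * μ #(S \ T)) hSmem,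
      sum_congr rfl fun T hT => ?_, add_left_inj] at hexpand
    · simpa [hμ0] using hexpand
    · obtain ⟨hne, hT⟩ := mem_erase.mp hT
      obtain ⟨hTS, hvT⟩ := mem_filter.mp hT
      rw [mem_powerset] at hTS
      rw [ih T (hTS.ssubset_of_ne hne) ⟨v, hvT⟩ fun U hU => hμ U (hU.trans hTS)]

lemma tendsto_mul_exp_sub_one_s12 {ι : Type*} {l : Filter ι} {c d : ι → ℝ} {L : ℝ}
    (hd : Tendsto d l (𝓝 0)) (hcd : Tendsto (fun i => c i * d i) l (𝓝 L)) :
    Tendsto (fun i => c i * (Real.exp (d i) - 1)) l (𝓝 L) := by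
  have hslope : Tendsto (dslope Real.exp 0) (𝓝 0) (𝓝 1) := by
    have hcont : ContinuousAt (dslope Real.exp 0) 0 :=
      continuousAt_dslope_same.mpr Real.differentiableAt_exp
    simpa [ContinuousAt, dslope_same] using hcont
  have hlim := hcd.mul (hslope.comp hd)
  rw [mul_one] at hlim
  refine hlim.congr fun i => ?_
  have := sub_smul_dslope Real.exp 0 (d i)
  simp only [sub_zero, smul_eq_mul, Real.exp_zero] at this
  rw [Function.comp_apply, mul_assoc, this]

theorem tendsto_pow_mul_sum_connectedHypergraphs {ι : Type*} {l : Filter ι} {s : ι → ℝ}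
    {f : ℕ → ι → ℝ} {c : ℝ} (hS : 2 ≤ #S) (hs : ∀ᶠ i in l, 1 ≤ s i)
    (hsmall : ∀ k, 2 ≤ k → k ≤ #S → Tendsto (fun i => s i ^ (2 * k - 1) * f k i) l (𝓝 0))
    (hmain : Tendsto (fun i => s i ^ (2 * #S) * f #S i) l (𝓝 c)) :
    Tendsto (fun i => s i ^ (2 * #S) * ∑ H ∈ connectedHypergraphs S, ∏ e ∈ H, f #e i) l
      (𝓝 c) := by
  classical
  have hterm : ∀ H ∈ (connectedHypergraphs S).erase {S},
      Tendsto (fun i => s i ^ (2 * #S) * ∏ e ∈ H, f #e i) l (𝓝 0) := by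
    intro H hH
    obtain ⟨hne, hH⟩ := mem_erase.mp hH
    have hHS := (mem_connectedHypergraphs.mp hH).1
    have hweight := two_mul_card_le_sum_of_mem_connectedHypergraphs hS hH hne
    have hH_nonempty : H.Nonempty := by
      rw [nonempty_iff_ne_empty]
      rintro rfl
      simp only [sum_empty] at hweight
      omega
    have hprod : Tendsto (fun i => ∏ e ∈ H, s i ^ (2 * #e - 1) * f #e i) l (𝓝 0) := by
      obtain ⟨e₀, he₀⟩ := hH_nonempty
      rw [← prod_eq_zero he₀ (f := fun _ => (0 : ℝ)) rfl]
      refine tendsto_finsetProd H fun e he => ?_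
      obtain ⟨heS, hcard⟩ := mem_hyperedges.mp (hHS he)
      exact hsmall #e hcard (card_le_card heS)
    refine squeeze_zero_norm' ?_ (tendsto_zero_iff_norm_tendsto_zero.mp hprod)
    filter_upwards [hs] with i hi
    rw [prod_mul_distrib, prod_pow_eq_pow_sum, norm_mul, norm_mul, norm_pow, norm_pow]
    gcongr
    exact hi.trans (Real.le_norm_self _)
  rw [← add_zero c, ← sum_const_zero (s := (connectedHypergraphs S).erase {S})]
  refine (hmain.add (tendsto_finsetSum _ hterm)).congr fun i => ?_
  rw [← add_sum_erase _ _ (singleton_mem_connectedHypergraphs hS), mul_add, mul_sum,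
    prod_singleton]

theorem tendsto_pow_mul_cumulant {ι : Type*} {l : Filter ι} {s : ι → ℝ} {μ : ι → ℕ → ℝ} {p : ℕ}
    {a c : ℝ} (hp : 2 ≤ p) (hs : ∀ᶠ i in l, 1 ≤ s i) (hμ0 : ∀ᶠ i in l, μ i 0 = 1)
    (hμ : ∀ᶠ i in l, ∀ q ≤ p, 0 < μ i q) (hμ1 : Tendsto (fun i => μ i 1) l (𝓝 a))
    (hsmall : ∀ k, 2 ≤ k → k ≤ p → Tendsto
      (fun i => s i ^ (2 * k - 1) * logFwdDiff (μ i) k) l (𝓝 0))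
    (hmain : Tendsto
      (fun i => s i ^ (2 * p) * logFwdDiff (μ i) p) l (𝓝 c)) :
    Tendsto (fun i => s i ^ (2 * p) * cumulant (μ i) p) l (𝓝 (a ^ p * c)) := by
  have hd : ∀ k, 2 ≤ k → k ≤ p → Tendsto (fun i => logFwdDiff (μ i) k) l (𝓝 0) := by
    intro k hk hkp
    refine squeeze_zero_norm' ?_ (tendsto_zero_iff_norm_tendsto_zero.mp (hsmall k hk hkp))
    filter_upwards [hs] with i hi
    rw [norm_mul]
    exact le_mul_of_one_le_left (norm_nonneg _)
      ((one_le_pow₀ hi).trans (Real.le_norm_self _))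
  have hcluster := tendsto_pow_mul_sum_connectedHypergraphs
    (S := (univ : Finset (Fin p))) (f := fun k i => Real.exp (logFwdDiff (μ i) k) - 1) (c := c)
    (by simpa using hp) hs
    (fun k hk hkp => tendsto_mul_exp_sub_one_s12 (hd k hk (by simpa using hkp))
      (hsmall k hk (by simpa using hkp)))
    (by simpa using tendsto_mul_exp_sub_one_s12 (hd p hp le_rfl) hmain)
  refine ((hμ1.pow p).mul hcluster).congr' ?_
  filter_upwards [hμ0, hμ] with i hi0 hi
  have hmayer := cumulant_card_eq_sum_connectedHypergraphs (S := (univ : Finset (Fin p)))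
    (μ := μ i) (a := μ i 1) (w := fun e => Real.exp (logFwdDiff (μ i) #e) - 1)
    (card_pos.mp (by simpa using (by omega : 0 < p))) fun T _ => by
      simp only [add_sub_cancel]
      exact moment_card_eq_pow_mul_prod_hyperedges hi0 fun q hq =>
        hi q (hq.trans (by simpa using card_le_univ T))
  rw [card_univ, Fintype.card_fin] at hmayer
  rw [hmayer, card_univ, Fintype.card_fin]
  ring

end Cumulant

section LogFwdDiff

variable {k : ℕ} {μ ν : ℕ → ℝ}

lemma logFwdDiff_eq_sum (μ : ℕ → ℝ) (k : ℕ) :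
    logFwdDiff μ k = ∑ i ∈ range (k + 1), (-1) ^ (k - i) * (k.choose i : ℝ) * Real.log (μ i) := by
  simp [logFwdDiff, fwdDiff_iter_eq_sum_shift]

lemma sum_neg_one_pow_mul_choose_mul_pow {r : ℕ} (hr : r ≤ k) :
    ∑ i ∈ range (k + 1), (-1) ^ (k - i) * (k.choose i : ℝ) * (i : ℝ) ^ r =
      if r = k then (k.factorial : ℝ) else 0 := by
  have hsum := fwdDiff_iter_eq_sum_shift (1 : ℝ) (fun x => x ^ r) k 0
  simp only [zsmul_eq_mul, nsmul_eq_mul, mul_one, zero_add, Int.cast_mul, Int.cast_pow,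
    Int.cast_neg, Int.cast_one, Int.cast_natCast] at hsum
  rw [← hsum]
  split_ifs with h
  · rw [h, fwdDiff_iter_eq_factorial]
    simp
  · rw [fwdDiff_iter_pow_eq_zero_of_lt (hr.lt_of_ne h), Pi.zero_apply]

lemma logFwdDiff_congr (h : ∀ i ≤ k, μ i = ν i) : logFwdDiff μ k = logFwdDiff ν k := by
  simp only [logFwdDiff_eq_sum]
  exact sum_congr rfl fun i hi => by rw [h i (mem_range_succ_iff.mp hi)]

lemma logFwdDiff_inv (μ : ℕ → ℝ) (k : ℕ) :
    logFwdDiff (fun i => (μ i)⁻¹) k = -logFwdDiff μ k := by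
  simp [logFwdDiff_eq_sum, Real.log_inv]

lemma logFwdDiff_mul (hμ : ∀ i ≤ k, μ i ≠ 0) (hν : ∀ i ≤ k, ν i ≠ 0) :
    logFwdDiff (fun i => μ i * ν i) k = logFwdDiff μ k + logFwdDiff ν k := by
  simp only [logFwdDiff_eq_sum, ← sum_add_distrib, ← mul_add]
  refine sum_congr rfl fun i hi => ?_
  rw [Real.log_mul (hμ i (mem_range_succ_iff.mp hi)) (hν i (mem_range_succ_iff.mp hi))]

lemma logFwdDiff_prod {ι : Type*} (s : Finset ι) {F : ι → ℕ → ℝ}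
    (hF : ∀ j ∈ s, ∀ i ≤ k, F j i ≠ 0) :
    logFwdDiff (fun i => ∏ j ∈ s, F j i) k = ∑ j ∈ s, logFwdDiff (F j) k := by
  simp only [logFwdDiff_eq_sum]
  rw [sum_comm]
  refine sum_congr rfl fun i hi => ?_
  rw [Real.log_prod fun j hj => hF j hj i (mem_range_succ_iff.mp hi), mul_sum]

lemma logFwdDiff_const (hk : k ≠ 0) (a : ℝ) : logFwdDiff (fun _ => a) k = 0 := by
  have h := sum_neg_one_pow_mul_choose_mul_pow k.zero_le
  rw [if_neg hk.symm] at h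
  simp only [pow_zero, mul_one] at h
  rw [logFwdDiff_eq_sum, ← sum_mul, h, zero_mul]

lemma logFwdDiff_pow (hk : 2 ≤ k) (r : ℝ) : logFwdDiff (fun i => r ^ i) k = 0 := by
  have h := sum_neg_one_pow_mul_choose_mul_pow (by omega : 1 ≤ k)
  rw [if_neg (by omega)] at h
  simp only [pow_one] at h
  simp only [logFwdDiff_eq_sum, Real.log_pow, ← mul_assoc, ← sum_mul, h, zero_mul]

lemma logFwdDiff_const_mul (hk : k ≠ 0) {a : ℝ} (ha : a ≠ 0) (hμ : ∀ i ≤ k, μ i ≠ 0) :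
    logFwdDiff (fun i => a * μ i) k = logFwdDiff μ k := by
  rw [logFwdDiff_mul (fun _ _ => ha) hμ, logFwdDiff_const hk, zero_add]

lemma tendsto_logFwdDiff {ι : Type*} {l : Filter ι} {F : ι → ℕ → ℝ}
    (hF : ∀ i ≤ k, Tendsto (F · i) l (𝓝 (μ i))) (hμ : ∀ i ≤ k, μ i ≠ 0) :
    Tendsto (fun n => logFwdDiff (F n) k) l (𝓝 (logFwdDiff μ k)) := by
  simp only [logFwdDiff_eq_sum]
  refine tendsto_finsetSum _ fun i hi => ?_
  rw [mem_range_succ_iff] at hi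
  exact ((hF i hi).log (hμ i hi)).const_mul _

lemma logFwdDiff_sub_mul (hk : k ≠ 0) {x h : ℝ} (hx : x ≠ 0) (hne : ∀ i ≤ k, x - i * h ≠ 0) :
    logFwdDiff (fun i => x - i * h) k = logFwdDiff (fun i => 1 - i * (h / x)) k := by
  have hfactor : ∀ i : ℕ, x - i * h = x * (1 - i * (h / x)) := fun i => by field_simp
  simp only [hfactor] at hne ⊢
  exact logFwdDiff_const_mul hk hx fun i hi => right_ne_zero_of_mul (hne i hi)

lemma isLittleO_sum_add_log_one_sub (k : ℕ) :
    (fun y : ℝ => ∑ r ∈ range k, y ^ (r + 1) / (r + 1) + Real.log (1 - y)) =o[𝓝 0]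
      fun y => y ^ k := by
  refine Asymptotics.IsBigO.trans_isLittleO ?_ (Asymptotics.isLittleO_pow_pow (k.lt_add_one))
  refine Asymptotics.IsBigO.of_bound 2 ?_
  filter_upwards [Metric.ball_mem_nhds (0 : ℝ) (by norm_num : (0 : ℝ) < 1 / 2)] with y hy
  rw [mem_ball_zero_iff, Real.norm_eq_abs] at hy
  refine (Real.abs_log_sub_add_sum_range_le (by linarith) k).trans ?_
  rw [norm_pow, Real.norm_eq_abs, div_le_iff₀ (by linarith)]
  nlinarith [pow_nonneg (abs_nonneg y) (k + 1)]

lemma sum_neg_one_pow_mul_choose_mul_sum_pow_div (hk : k ≠ 0) (t : ℝ) :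
    ∑ i ∈ range (k + 1), (-1) ^ (k - i) * (k.choose i : ℝ) *
      ∑ r ∈ range k, (i * t) ^ (r + 1) / (r + 1) = (k - 1).factorial * t ^ k := by
  obtain ⟨k, rfl⟩ := Nat.exists_eq_add_one_of_ne_zero hk
  simp only [mul_sum]
  rw [sum_comm]
  calc _ = ∑ r ∈ range (k + 1), t ^ (r + 1) / (r + 1) *
        if r + 1 = k + 1 then ((k + 1).factorial : ℝ) else 0 := by
        refine sum_congr rfl fun r hr => ?_
        rw [← sum_neg_one_pow_mul_choose_mul_pow (show r + 1 ≤ k + 1 from mem_range.mp hr), mul_sum]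
        exact sum_congr rfl fun i _ => by rw [mul_pow]; ring
    _ = _ := by
        simp only [add_left_inj, mul_ite, mul_zero, sum_ite_eq', self_mem_range_succ, if_true,
          Nat.factorial_succ, Nat.add_sub_cancel]
        push_cast
        field_simp

theorem tendsto_logFwdDiff_one_sub_mul_div_pow (hk : k ≠ 0) :
    Tendsto (fun t => logFwdDiff (fun i => 1 - i * t) k / t ^ k) (𝓝[≠] 0)
      (𝓝 (-(k - 1).factorial)) := by
  let b : ℕ → ℝ := fun i => (-1) ^ (k - i) * (k.choose i : ℝ)
  let R : ℝ → ℝ := fun y => ∑ r ∈ range k, y ^ (r + 1) / (r + 1) + Real.log (1 - y)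
  have hterm : ∀ i : ℕ, (fun t => b i * R (i * t)) =o[𝓝[≠] 0] fun t => t ^ k := by
    intro i
    have hlim : Tendsto (fun t : ℝ => i * t) (𝓝[≠] 0) (𝓝 0) :=
      ((continuous_const_mul (i : ℝ)).tendsto' 0 0 (mul_zero _)).mono_left nhdsWithin_le_nhds
    have hO : (fun t : ℝ => (i * t) ^ k) =O[𝓝[≠] 0] fun t => t ^ k := by
      simp only [mul_pow]
      exact Asymptotics.isBigO_const_mul_self _ _ _
    exact (((isLittleO_sum_add_log_one_sub k).comp_tendsto hlim).trans_isBigO hO).const_mul_left _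
  have hsum := (Asymptotics.IsLittleO.fun_sum (s := range (k + 1))
    fun i _ => hterm i).tendsto_div_nhds_zero.sub_const ((k - 1).factorial : ℝ)
  rw [zero_sub] at hsum
  refine hsum.congr' ?_
  filter_upwards [self_mem_nhdsWithin] with t ht
  have hexpand : ∑ i ∈ range (k + 1), b i * R (i * t) =
      (k - 1).factorial * t ^ k + logFwdDiff (fun i => 1 - i * t) k := by
    rw [← sum_neg_one_pow_mul_choose_mul_sum_pow_div hk, logFwdDiff_eq_sum, ← sum_add_distrib]
    exact sum_congr rfl fun i _ => mul_add _ _ _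
  rw [hexpand, add_div, mul_div_cancel_right₀ _ (pow_ne_zero k ht), add_sub_cancel_left]

end LogFwdDiff

section Gamma

variable {k : ℕ}

lemma logFwdDiff_succ {μ : ℕ → ℝ} (hμ : ∀ i ≤ k + 1, μ i ≠ 0) :
    logFwdDiff μ (k + 1) = logFwdDiff (fun i => μ (i + 1) * (μ i)⁻¹) k := by
  rw [logFwdDiff_mul (fun i hi => hμ _ (by omega)) (fun i hi => inv_ne_zero (hμ i (by omega))),
    logFwdDiff_inv, ← sub_eq_add_neg]
  simp only [logFwdDiff, Function.iterate_succ_apply', fwdDiff]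
  rw [fwdDiff_iter_comp_add 1 (fun i => Real.log (μ i)) 1 k 0]

lemma logFwdDiff_Gamma_sub_natCast {x : ℝ} (hx : k + 1 < x) :
    logFwdDiff (fun i => Real.Gamma (x - i)) (k + 1) =
      -logFwdDiff (fun i => x - 1 - i) k := by
  have hpos : ∀ i ≤ k + 1, 0 < x - i := fun i hi => by
    have : (i : ℝ) ≤ k + 1 := mod_cast hi
    linarith
  rw [logFwdDiff_succ fun i hi => (Real.Gamma_pos_of_pos (hpos i hi)).ne', ← logFwdDiff_inv]
  refine logFwdDiff_congr fun i hi => ?_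
  have hi' := hpos (i + 1) (by omega)
  have hrec := Real.Gamma_add_one hi'.ne'
  have hΓ := (Real.Gamma_pos_of_pos hi').ne'
  push_cast at *
  rw [show x - (i + 1) + 1 = x - i by ring] at hrec
  rw [hrec, show x - 1 - i = x - (i + 1) by ring]
  field_simp

lemma summable_logFwdDiff_one_sub_mul_div {x h : ℝ} (hk : 2 ≤ k) (hx : 0 < x) (hh : h ≠ 0) :
    Summable fun l : ℕ => logFwdDiff (fun i => 1 - i * (h / (x + l))) k := by
  have htop : Tendsto (fun l : ℕ => x + l) atTop atTop :=
    tendsto_atTop_add_const_left _ x tendsto_natCast_atTop_atTop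
  have hlim : Tendsto (fun l : ℕ => h / (x + l)) atTop (𝓝[≠] 0) :=
    tendsto_nhdsWithin_iff.mpr ⟨htop.const_div_atTop h, .of_forall fun l =>
      div_ne_zero hh (by positivity)⟩
  have hpow : (fun l : ℕ => (h / (x + l)) ^ k) =O[atTop] fun l : ℕ => ((l : ℝ) ^ k)⁻¹ := by
    simp only [← inv_pow]
    refine (Asymptotics.IsBigO.of_bound |h| ?_).pow k
    filter_upwards [eventually_gt_atTop 0] with l hl
    have : (0 : ℝ) < l := Nat.cast_pos.mpr hl
    rw [norm_div, Real.norm_eq_abs, Real.norm_of_nonneg (by positivity),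
      Real.norm_of_nonneg (by positivity), ← div_eq_mul_inv]
    gcongr
    linarith
  refine summable_of_isBigO_nat (Real.summable_nat_pow_inv.mpr hk) (.trans ?_ hpow)
  refine (Asymptotics.isBigO_of_div_tendsto_nhds ?_ _
    (tendsto_logFwdDiff_one_sub_mul_div_pow (by omega))).comp_tendsto hlim
  filter_upwards [self_mem_nhdsWithin] with t ht hzero
  exact absurd hzero (pow_ne_zero k ht)

theorem hasSum_logFwdDiff_Gamma {x h : ℝ} (hk : 2 ≤ k) (hh : h ≠ 0)
    (hpos : ∀ i ≤ k, 0 < x - i * h) :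
    HasSum (fun l : ℕ => logFwdDiff (fun i => 1 - i * (h / (x + l))) k)
      (-logFwdDiff (fun i => Real.Gamma (x - i * h)) k) := by
  have hx : 0 < x := by simpa using hpos 0 k.zero_le
  have hsub : ∀ i ≤ k, ∀ l : ℕ, x + l - i * h ≠ 0 := fun i hi l => by
    have := hpos i hi
    have : (0 : ℝ) ≤ l := l.cast_nonneg
    linarith
  have hseq : ∀ᶠ N : ℕ in atTop, logFwdDiff (fun i => Real.GammaSeq (x - i * h) N) k =
      -∑ l ∈ range (N + 1), logFwdDiff (fun i => 1 - i * (h / (x + l))) k := by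
    filter_upwards [eventually_gt_atTop 0] with N hN
    have hN' : (0 : ℝ) < N := Nat.cast_pos.mpr hN
    have hprod : ∀ i ≤ k, ∏ l ∈ range (N + 1), (x + l - i * h) ≠ 0 := fun i hi =>
      prod_ne_zero_iff.mpr fun l _ => hsub i hi l
    calc logFwdDiff (fun i => Real.GammaSeq (x - i * h) N) k
        = logFwdDiff (fun i => (N : ℝ) ^ x * N.factorial *
            (((N : ℝ) ^ (-h)) ^ i * (∏ l ∈ range (N + 1), (x + l - i * h))⁻¹)) k := by
          refine logFwdDiff_congr fun i _ => ?_
          rw [Real.GammaSeq, ← Real.rpow_mul_natCast hN'.le, sub_eq_add_neg x, Real.rpow_add hN']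
          simp only [show ∀ l : ℕ, x + -(i * h) + l = x + l - i * h from fun l => by ring]
          ring_nf
      _ = -∑ l ∈ range (N + 1), logFwdDiff (fun i => x + l - i * h) k := by
          rw [logFwdDiff_const_mul (by omega) (by positivity) fun i hi =>
              mul_ne_zero (by positivity) (inv_ne_zero (hprod i hi)),
            logFwdDiff_mul (fun i _ => by positivity) fun i hi => inv_ne_zero (hprod i hi),
            logFwdDiff_pow hk, logFwdDiff_inv, zero_add,
            logFwdDiff_prod _ fun l _ i hi => hsub i hi l]
      _ = _ := by
          congr 1
          exact sum_congr rfl fun l _ =>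
            logFwdDiff_sub_mul (by omega) (by positivity) fun i hi => hsub i hi l
  refine (summable_logFwdDiff_one_sub_mul_div hk hx hh).hasSum_iff_tendsto_nat.mpr ?_
  rw [← tendsto_add_atTop_iff_nat 1]
  have hlim : Tendsto (fun N => logFwdDiff (fun i => Real.GammaSeq (x - i * h) N) k) atTop
      (𝓝 (logFwdDiff (fun i => Real.Gamma (x - i * h)) k)) :=
    tendsto_logFwdDiff (fun i _ => Real.GammaSeq_tendsto_Gamma _)
      fun i hi => (Real.Gamma_pos_of_pos (hpos i hi)).ne'
  refine hlim.neg.congr' ?_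
  filter_upwards [hseq] with N hN
  rw [hN, neg_neg]

lemma hasSum_min_mul_of_hasSum_add {a A : ℕ → ℝ} {n : ℕ}
    (hA : ∀ j < n, HasSum (fun l => a (l + j)) (A j)) :
    HasSum (fun m => (min n (m + 1) : ℕ) * a m) (∑ j ∈ range n, A j) := by
  have hshift : ∀ j ∈ range n, HasSum (fun m => if j ≤ m then a m else 0) (A j) := by
    intro j hj
    refine ((add_left_injective j).hasSum_iff fun m hm => if_neg fun hjm => hm ?_).mp ?_
    · exact ⟨m - j, Nat.sub_add_cancel hjm⟩
    · simpa [Function.comp_def] using hA j (mem_range.mp hj)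
  refine (hasSum_sum hshift).congr_fun fun m => ?_
  have hfilter : {j ∈ range n | j ≤ m} = range (min n (m + 1)) := by
    ext j
    simp only [mem_filter, mem_range]
    omega
  rw [← sum_filter, hfilter, sum_const, card_range, nsmul_eq_mul]

end Gamma

section Moments

variable {k n i : ℕ}

lemma sq_sub_pos_of_lt (hi : i < n) : (0 : ℝ) < n * n - i := by
  have : (i : ℝ) + 1 ≤ n := mod_cast hi
  nlinarith [(i.cast_nonneg : (0 : ℝ) ≤ i)]

lemma one_add_sub_mul_inv_pos_of_lt (hi : i < n) (j : ℕ) : (0 : ℝ) < 1 + j - i * (1 / n) := by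
  have hdiv : (i : ℝ) / n < 1 := (div_lt_one (Nat.cast_pos.mpr (by omega))).mpr (mod_cast hi)
  have : (0 : ℝ) ≤ j := j.cast_nonneg
  rw [mul_one_div]
  linarith

lemma mu0_self_eq (i n : ℕ) :
    mu0 i n n = Real.Gamma (n * n) / (∏ j ∈ range n, Real.Gamma (1 + j)) * ((n : ℝ)⁻¹ ^ i *
      ((Real.Gamma (n * n - i))⁻¹ * ∏ j ∈ range n, Real.Gamma (1 + j - i * (1 / n)))) := by
  have harg : ∀ j : ℕ, (n : ℝ) - n + 1 - i / n + j = 1 + j - i * (1 / n) := fun j => by ring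
  simp only [mu0, prod_div_distrib, harg]
  simp only [sub_self, zero_add, inv_pow, div_eq_mul_inv, mul_inv]
  ring

lemma mu0_zero_self (hn : 0 < n) : mu0 0 n n = 1 := by
  have hprod : ∏ j ∈ range n, Real.Gamma (1 + j) ≠ 0 :=
    prod_ne_zero_iff.mpr fun j _ => (Real.Gamma_pos_of_pos (by positivity)).ne'
  have : Real.Gamma (n * n) ≠ 0 := (Real.Gamma_pos_of_pos (by positivity)).ne'
  rw [mu0_self_eq]
  simp only [pow_zero, Nat.cast_zero, sub_zero, zero_mul]
  field_simp

lemma mu0_self_pos (hi : i < n) : 0 < mu0 i n n := by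
  have hn : (0 : ℝ) < n := Nat.cast_pos.mpr (by omega)
  rw [mu0_self_eq]
  exact mul_pos
    (div_pos (Real.Gamma_pos_of_pos (mul_pos hn hn))
      (prod_pos fun j _ => Real.Gamma_pos_of_pos (by positivity)))
    (mul_pos (pow_pos (inv_pos.mpr hn) i)
      (mul_pos (inv_pos.mpr (Real.Gamma_pos_of_pos (sq_sub_pos_of_lt hi)))
        (prod_pos fun j _ => Real.Gamma_pos_of_pos (one_add_sub_mul_inv_pos_of_lt hi j))))

lemma logFwdDiff_mu0 (hk : 2 ≤ k) (hkn : k < n) :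
    logFwdDiff (fun i => mu0 i n n) k = -logFwdDiff (fun i => Real.Gamma (n * n - i)) k +
      ∑ j ∈ range n, logFwdDiff (fun i => Real.Gamma (1 + j - i * (1 / n))) k := by
  have hΓ₁ : ∀ i ≤ k, (Real.Gamma (n * n - i))⁻¹ ≠ 0 := fun i hi =>
    inv_ne_zero (Real.Gamma_pos_of_pos (sq_sub_pos_of_lt (by omega))).ne'
  have hΓ₂ : ∀ j ∈ range n, ∀ i ≤ k, Real.Gamma (1 + j - i * (1 / n)) ≠ 0 := fun j _ i hi =>
    (Real.Gamma_pos_of_pos (one_add_sub_mul_inv_pos_of_lt (by omega) j)).ne'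
  have hprod : ∀ i ≤ k, ∏ j ∈ range n, Real.Gamma (1 + j - i * (1 / n)) ≠ 0 := fun i hi =>
    prod_ne_zero_iff.mpr fun j hj => hΓ₂ j hj i hi
  have hn : ∀ i ≤ k, (n : ℝ)⁻¹ ^ i ≠ 0 := fun i _ => by
    have : (0 : ℝ) < n := Nat.cast_pos.mpr (by omega)
    positivity
  have hne : ∀ i ≤ k, mu0 i n n ≠ 0 := fun i hi => (mu0_self_pos (by omega)).ne'
  simp only [mu0_self_eq] at hne ⊢
  rw [logFwdDiff_const_mul (by omega) (left_ne_zero_of_mul (hne 0 k.zero_le))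
      fun i hi => right_ne_zero_of_mul (hne i hi),
    logFwdDiff_mul hn fun i hi => mul_ne_zero (hΓ₁ i hi) (hprod i hi), logFwdDiff_pow hk,
    logFwdDiff_mul hΓ₁ hprod, logFwdDiff_inv, logFwdDiff_prod _ hΓ₂, zero_add]

theorem hasSum_logFwdDiff_mu0 (hk : 2 ≤ k) (hkn : k < n) :
    HasSum (fun m => (min n (m + 1) : ℕ) * logFwdDiff (fun i => 1 - i * (1 / (n * (m + 1)))) k)
      (logFwdDiff (fun i => 1 - i * (1 / (n * n - 1))) (k - 1) -
        logFwdDiff (fun i => mu0 i n n) k) := by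
  obtain ⟨k, rfl⟩ := Nat.exists_eq_add_of_le' (by omega : 1 ≤ k)
  have hn : (0 : ℝ) < n := Nat.cast_pos.mpr (by omega)
  have hsum := hasSum_min_mul_of_hasSum_add
    (a := fun m => logFwdDiff (fun i => 1 - i * (1 / (n * (m + 1)))) (k + 1))
    (A := fun j => -logFwdDiff (fun i => Real.Gamma (1 + j - i * (1 / n))) (k + 1)) (n := n)
    fun j _ => by
      convert hasSum_logFwdDiff_Gamma (x := 1 + j) hk (one_div_pos.mpr hn).ne' fun i hi =>
        one_add_sub_mul_inv_pos_of_lt (by omega) j using 6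
      push_cast
      field_simp
      ring
  convert hsum using 1
  have hx : (k : ℝ) + 1 < n * n := by
    have := sq_sub_pos_of_lt hkn
    push_cast at this
    linarith
  rw [logFwdDiff_mu0 hk hkn, logFwdDiff_Gamma_sub_natCast hx, sum_neg_distrib]
  have := logFwdDiff_sub_mul (k := k) (by omega) (x := n * n - 1) (h := 1) (by linarith)
    fun i hi => by
      have := sq_sub_pos_of_lt (by omega : i + 1 < n)
      push_cast at this
      linarith
  simp only [mul_one] at this
  rw [this, Nat.add_sub_cancel]
  ring

end Moments

section Limits

variable {k r : ℕ} {c : ℝ}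

lemma tendsto_tsum_mul_of_tendstoUniformly {ι β : Type*} {l : Filter ι} {w f : ι → β → ℝ}
    {u b : β → ℝ} (hb : Summable b) (hwb : ∀ᶠ i in l, ∀ x, |w i x| ≤ b x)
    (hw : ∀ x, Tendsto (fun i => w i x) l (𝓝 (u x))) (hf : TendstoUniformly f (fun _ => c) l) :
    Tendsto (fun i => ∑' x, w i x * f i x) l (𝓝 (c * ∑' x, u x)) := by
  rw [mul_comm, ← tsum_mul_right]
  refine tendsto_tsum_of_dominated_convergence (hb.mul_right (|c| + 1))
    (fun x => (hw x).mul (hf.tendsto_at x)) ?_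
  filter_upwards [hwb, Metric.tendstoUniformly_iff.mp hf 1 one_pos] with i hi hfi x
  have hfx : |f i x| ≤ |c| + 1 := by
    have hdist := hfi x
    rw [dist_comm, Real.dist_eq] at hdist
    linarith [abs_sub_abs_le_abs_sub (f i x) c]
  rw [norm_mul, Real.norm_eq_abs, Real.norm_eq_abs]
  exact mul_le_mul (hi x) hfx (abs_nonneg _) ((abs_nonneg _).trans (hi x))

lemma tendstoUniformly_comp_one_div_mul {φ : ℝ → ℝ} (hφ : Tendsto φ (𝓝[≠] 0) (𝓝 c)) :
    TendstoUniformly (fun n m : ℕ => φ (1 / (n * (m + 1)))) (fun _ => c) atTop := by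
  rw [← tendsto_prod_top_iff]
  refine hφ.comp (f := fun x : ℕ × ℕ => 1 / ((x.1 : ℝ) * (x.2 + 1)))
    (tendsto_nhdsWithin_iff.mpr ⟨?_, ?_⟩)
  · refine squeeze_zero (fun x => by positivity) (fun x => ?_)
      (tendsto_one_div_atTop_nhds_zero_nat.comp tendsto_fst)
    rw [Function.comp_apply, ← div_div]
    exact div_le_self (by positivity) (by linarith [(x.2.cast_nonneg : (0 : ℝ) ≤ x.2)])
  · filter_upwards [tendsto_fst.eventually (eventually_gt_atTop 0)] with x hx
    have : (0 : ℝ) < x.1 := Nat.cast_pos.mpr hx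
    exact (show (0 : ℝ) < 1 / (x.1 * (x.2 + 1)) by positivity).ne'

lemma tendsto_pow_mul_tsum_min_mul {φ : ℝ → ℝ} (hk : 3 ≤ k)
    (hφ : Tendsto (fun t => φ t / t ^ k) (𝓝[≠] 0) (𝓝 c)) :
    Tendsto (fun n : ℕ => (n : ℝ) ^ k *
      ∑' m : ℕ, (min n (m + 1) : ℕ) * φ (1 / (n * (m + 1)))) atTop
      (𝓝 (c * zetaNat (k - 1))) := by
  obtain ⟨k, rfl⟩ := Nat.exists_eq_add_of_le' (by omega : 1 ≤ k)
  have hsum : Summable fun m : ℕ => 1 / ((m : ℝ) + 1) ^ k := by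
    have := (summable_nat_add_iff 1).mpr (Real.summable_one_div_nat_pow.mpr (by omega : 1 < k))
    exact_mod_cast this
  have hlim := tendsto_tsum_mul_of_tendstoUniformly
    (w := fun n m : ℕ => (min n (m + 1) : ℕ) / ((m : ℝ) + 1) ^ (k + 1))
    (u := fun m => 1 / ((m : ℝ) + 1) ^ k) hsum
    (.of_forall fun n m => ?_) (fun m => tendsto_const_nhds.congr' ?_)
    (tendstoUniformly_comp_one_div_mul hφ)
  · refine hlim.congr' ?_
    filter_upwards [eventually_gt_atTop 0] with n hn
    have : (0 : ℝ) < n := Nat.cast_pos.mpr hn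
    rw [← tsum_mul_left]
    refine tsum_congr fun m => ?_
    rw [one_div_pow, mul_pow]
    field_simp
  · have hmin : ((min n (m + 1) : ℕ) : ℝ) ≤ m + 1 := mod_cast min_le_right n (m + 1)
    rw [abs_of_nonneg (by positivity), pow_succ', div_mul_eq_div_div]
    gcongr
    exact (div_le_one (by positivity)).mpr hmin
  · filter_upwards [eventually_ge_atTop (m + 1)] with n hn
    rw [min_eq_right hn, pow_succ']
    push_cast
    field_simp

lemma sqrt_pow_three_mul_min_div_sq_le (n m : ℕ) :
    √n ^ 3 * (min n (m + 1) : ℕ) / ((n : ℝ) * (m + 1)) ^ 2 ≤ ((m : ℝ) + 1) ^ (-(3 / 2) : ℝ) := by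
  obtain rfl | hn := n.eq_zero_or_pos
  · simpa using Real.rpow_nonneg (by positivity) _
  have : (0 : ℝ) < n := Nat.cast_pos.mpr hn
  have hmin : ((min n (m + 1) : ℕ) : ℝ) ≤ √n * √(m + 1) := by
    rw [← Real.sqrt_mul n.cast_nonneg]
    refine Real.le_sqrt_of_sq_le ?_
    rw [sq]
    exact_mod_cast Nat.mul_le_mul (min_le_left n (m + 1)) (min_le_right n (m + 1))
  have hsqrt : √(n : ℝ) ^ 4 = (n : ℝ) ^ 2 := by
    rw [pow_mul _ 2 2, Real.sq_sqrt n.cast_nonneg]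
  calc √n ^ 3 * (min n (m + 1) : ℕ) / ((n : ℝ) * (m + 1)) ^ 2
      ≤ √n ^ 3 * (√n * √(m + 1)) / ((n : ℝ) * (m + 1)) ^ 2 := by gcongr
    _ = √(m + 1) / (m + 1) ^ 2 := by
        rw [← mul_assoc, ← pow_succ, hsqrt]
        field_simp
    _ = ((m : ℝ) + 1) ^ (-(3 / 2) : ℝ) := by
        rw [Real.sqrt_eq_rpow, ← Real.rpow_natCast, ← Real.rpow_sub (by positivity)]
        norm_num

lemma tendsto_sqrt_natCast_atTop : Tendsto (fun n : ℕ => √(n : ℝ)) atTop atTop :=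
  Real.tendsto_sqrt_atTop.comp tendsto_natCast_atTop_atTop

lemma tendsto_sqrt_pow_three_mul_tsum_min_mul {φ : ℝ → ℝ}
    (hφ : Tendsto (fun t => φ t / t ^ 2) (𝓝[≠] 0) (𝓝 c)) :
    Tendsto (fun n : ℕ => √n ^ 3 *
      ∑' m : ℕ, (min n (m + 1) : ℕ) * φ (1 / (n * (m + 1)))) atTop (𝓝 0) := by
  have hsum : Summable fun m : ℕ => ((m : ℝ) + 1) ^ (-(3 / 2) : ℝ) := by
    have := (summable_nat_add_iff 1).mpr
      (Real.summable_nat_rpow.mpr (by norm_num : -(3 / 2 : ℝ) < -1))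
    exact_mod_cast this
  have hlim := tendsto_tsum_mul_of_tendstoUniformly (u := fun _ => 0)
    (w := fun n m : ℕ => √n ^ 3 * (min n (m + 1) : ℕ) / ((n : ℝ) * (m + 1)) ^ 2) hsum
    (.of_forall fun n m => ?_) (fun m => ?_) (tendstoUniformly_comp_one_div_mul hφ)
  · rw [tsum_zero, mul_zero] at hlim
    refine hlim.congr' ?_
    filter_upwards [eventually_gt_atTop 0] with n hn
    have : (0 : ℝ) < n := Nat.cast_pos.mpr hn
    rw [← tsum_mul_left]
    refine tsum_congr fun m => ?_
    rw [one_div_pow, mul_pow]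
    field_simp
  · rw [abs_of_nonneg (by positivity)]
    exact sqrt_pow_three_mul_min_div_sq_le n m
  · have hinv := tendsto_sqrt_natCast_atTop.inv_tendsto_atTop.div_const ((m : ℝ) + 1)
    rw [zero_div] at hinv
    refine hinv.congr' ?_
    filter_upwards [eventually_ge_atTop (m + 1)] with n hn
    have hsqrt : 0 < √(n : ℝ) := Real.sqrt_pos.mpr (Nat.cast_pos.mpr (by omega))
    rw [min_eq_right hn, mul_pow, ← Real.sq_sqrt (n.cast_nonneg : (0 : ℝ) ≤ n),
      Real.sqrt_sq hsqrt.le, Pi.inv_apply]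
    push_cast
    field_simp

lemma tendsto_sqrt_pow_mul_logFwdDiff_one_sub_mul (hk : k ≠ 0) (hr : r < 4 * k) :
    Tendsto (fun n : ℕ => √n ^ r * logFwdDiff (fun i => 1 - i * (1 / ((n : ℝ) * n - 1))) k)
      atTop (𝓝 0) := by
  have hpos : ∀ᶠ n : ℕ in atTop, (0 : ℝ) < n * n - 1 := by
    filter_upwards [eventually_gt_atTop 1] with n hn
    exact_mod_cast sq_sub_pos_of_lt hn
  have hzero : Tendsto (fun n : ℕ => 1 / ((n : ℝ) * n - 1)) atTop (𝓝[≠] 0) := by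
    have hsq := tendsto_natCast_atTop_atTop (R := ℝ).atTop_mul_atTop₀ tendsto_natCast_atTop_atTop
    exact tendsto_nhdsWithin_iff.mpr ⟨(tendsto_atTop_add_const_right _ (-1) hsq).const_div_atTop 1,
      hpos.mono fun n hn => (one_div_pos.mpr hn).ne'⟩
  have hratio : Tendsto (fun n : ℕ => (n : ℝ) ^ 2 * (1 / ((n : ℝ) * n - 1))) atTop (𝓝 1) := by
    have hinv := ((tendsto_inv_atTop_nhds_zero_nat (𝕜 := ℝ)).pow 2).const_sub 1
    convert (hinv.inv₀ (by norm_num)).congr' ?_ using 2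
    · norm_num
    filter_upwards [eventually_gt_atTop 0] with n hn
    have : (0 : ℝ) < n := Nat.cast_pos.mpr hn
    rw [show 1 - (n : ℝ)⁻¹ ^ 2 = (n * n - 1) / n ^ 2 by field_simp, inv_div, mul_one_div]
  have hlim := (((tendsto_pow_div_pow_atTop_zero hr).comp tendsto_sqrt_natCast_atTop).mul
    (hratio.pow k)).mul ((tendsto_logFwdDiff_one_sub_mul_div_pow hk).comp hzero)
  rw [zero_mul, zero_mul] at hlim
  refine hlim.congr' ?_
  filter_upwards [hpos, eventually_gt_atTop 0] with n hn hn₀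
  have : 0 < √(n : ℝ) := Real.sqrt_pos.mpr (Nat.cast_pos.mpr hn₀)
  have hpow : √(n : ℝ) ^ (4 * k) = ((n : ℝ) ^ 2) ^ k := by
    rw [pow_mul, pow_mul _ 2 2, Real.sq_sqrt n.cast_nonneg]
  simp only [Function.comp_apply, hpow, mul_pow]
  have ht := one_div_pos.mpr hn
  generalize 1 / ((n : ℝ) * n - 1) = t at ht ⊢
  generalize logFwdDiff _ k = d
  field_simp

theorem tendsto_pow_mul_logFwdDiff_mu0 (hk : 3 ≤ k) :
    Tendsto (fun n : ℕ => (n : ℝ) ^ k * logFwdDiff (fun i => mu0 i n n) k) atTop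
      (𝓝 ((k - 1).factorial * zetaNat (k - 1))) := by
  have hsum := tendsto_pow_mul_tsum_min_mul hk
    (tendsto_logFwdDiff_one_sub_mul_div_pow (k := k) (by omega))
  have hbdry := tendsto_sqrt_pow_mul_logFwdDiff_one_sub_mul (k := k - 1) (r := 2 * k)
    (by omega) (by omega)
  convert (hbdry.sub hsum).congr' ?_ using 2
  · ring
  filter_upwards [eventually_gt_atTop k] with n hn
  rw [(hasSum_logFwdDiff_mu0 (by omega) hn).tsum_eq, pow_mul, Real.sq_sqrt n.cast_nonneg]
  ring

theorem tendsto_sqrt_pow_mul_logFwdDiff_mu0 (hk : 2 ≤ k) :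
    Tendsto (fun n : ℕ => √n ^ (2 * k - 1) * logFwdDiff (fun i => mu0 i n n) k) atTop (𝓝 0) := by
  obtain rfl | hk := hk.eq_or_lt
  · have hsum := tendsto_sqrt_pow_three_mul_tsum_min_mul
      (tendsto_logFwdDiff_one_sub_mul_div_pow two_ne_zero)
    have hbdry := tendsto_sqrt_pow_mul_logFwdDiff_one_sub_mul (r := 3) one_ne_zero (by norm_num)
    have hdiff := hbdry.sub hsum
    rw [sub_zero] at hdiff
    refine hdiff.congr' ?_
    filter_upwards [eventually_gt_atTop 2] with n hn
    rw [(hasSum_logFwdDiff_mu0 le_rfl hn).tsum_eq, Nat.add_sub_cancel 1 1]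
    ring
  · have hmain := (tendsto_pow_mul_logFwdDiff_mu0 hk).mul
      (tendsto_inv_atTop_zero.comp tendsto_sqrt_natCast_atTop)
    rw [mul_zero] at hmain
    refine hmain.congr' ?_
    filter_upwards [eventually_gt_atTop 0] with n hn
    have : 0 < √(n : ℝ) := Real.sqrt_pos.mpr (Nat.cast_pos.mpr hn)
    have hpow : (n : ℝ) ^ k = √n ^ (2 * k - 1) * √n := by
      rw [← pow_succ, Nat.sub_add_cancel (by omega), pow_mul, Real.sq_sqrt n.cast_nonneg]
    rw [Function.comp_apply, hpow]
    field_simp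

end Limits

section FirstMoment

lemma log_Gamma_sub_log_Gamma_sub_le {x h : ℝ} (hh : 0 < h) (hx : h < x) :
    Real.log (Real.Gamma x) - Real.log (Real.Gamma (x - h)) ≤ Real.log x * h := by
  have hx₀ : 0 < x := hh.trans hx
  have hslope := Real.convexOn_log_Gamma.slope_mono_adjacent (x := x - h) (y := x) (z := x + 1)
    (Set.mem_Ioi.mpr (sub_pos.mpr hx)) (Set.mem_Ioi.mpr (by linarith)) (by linarith) (by linarith)
  simp only [Function.comp_apply, sub_sub_cancel, add_sub_cancel_left, div_one] at hslope
  rw [Real.Gamma_add_one hx₀.ne', Real.log_mul hx₀.ne' (Real.Gamma_pos_of_pos hx₀).ne',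
    add_sub_cancel_right, div_le_iff₀ hh] at hslope
  linarith

lemma log_mul_le_log_Gamma_sub_log_Gamma_sub {x h : ℝ} (hh : 0 ≤ h) (hh₁ : h ≤ 1) (hx : 0 < x) :
    Real.log x * h ≤ Real.log (Real.Gamma (x + 1)) - Real.log (Real.Gamma (x + 1 - h)) := by
  have hconv := Real.convexOn_log_Gamma.2 (Set.mem_Ioi.mpr hx)
    (Set.mem_Ioi.mpr (by linarith : 0 < x + 1)) hh (sub_nonneg.mpr hh₁) (add_sub_cancel h 1)
  simp only [Function.comp_apply, smul_eq_mul] at hconv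
  rw [show h * x + (1 - h) * (x + 1) = x + 1 - h by ring, Real.Gamma_add_one hx.ne',
    Real.log_mul hx.ne' (Real.Gamma_pos_of_pos hx).ne'] at hconv
  rw [Real.Gamma_add_one hx.ne', Real.log_mul hx.ne' (Real.Gamma_pos_of_pos hx).ne']
  linarith

lemma sum_log_natCast_add_one (n : ℕ) :
    ∑ j ∈ range n, Real.log ((j : ℝ) + 1) = Real.log n.factorial := by
  rw [← prod_range_add_one_eq_factorial, Nat.cast_prod, Real.log_prod fun j _ => by positivity]
  push_cast
  rfl

lemma tendsto_log_natCast_div : Tendsto (fun n : ℕ => Real.log n / n) atTop (𝓝 0) :=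
  Real.isLittleO_log_id_atTop.tendsto_div_nhds_zero.comp tendsto_natCast_atTop_atTop

lemma tendsto_log_sub_log_factorial_div :
    Tendsto (fun n : ℕ => Real.log n - Real.log n.factorial / n) atTop (𝓝 1) := by
  have hinv := tendsto_inv_atTop_nhds_zero_nat (𝕜 := ℝ)
  have hstirling := (Stirling.tendsto_stirlingSeq_sqrt_pi.log (by positivity)).mul hinv
  have herror := (hstirling.add (tendsto_log_natCast_div.mul_const (1 / 2))).add
    (hinv.const_mul (1 / 2 * Real.log 2))
  have hlim := herror.const_sub 1
  simp only [mul_zero, zero_mul, add_zero, sub_zero] at hlim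
  refine hlim.congr' ?_
  filter_upwards [eventually_gt_atTop 0] with n hn
  have hn' : (0 : ℝ) < n := Nat.cast_pos.mpr hn
  rw [Stirling.log_stirlingSeq_formula, Real.log_mul (by norm_num) hn'.ne',
    Real.log_div hn'.ne' (Real.exp_pos 1).ne', Real.log_exp]
  field_simp
  ring

lemma sum_log_Gamma_sub_le {n : ℕ} (hn : 1 < n) :
    ∑ j ∈ range n, (Real.log (Real.Gamma (1 + j)) - Real.log (Real.Gamma (1 + j - 1 / n))) ≤
      Real.log n.factorial / n := by
  have hn' : (1 : ℝ) < n := Nat.one_lt_cast.mpr hn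
  have hinv : (1 : ℝ) / n < 1 := (div_lt_one (by positivity)).mpr hn'
  rw [← sum_log_natCast_add_one, sum_div]
  refine sum_le_sum fun j _ => ?_
  refine (log_Gamma_sub_log_Gamma_sub_le (one_div_pos.mpr (zero_lt_one.trans hn'))
    (hinv.trans_le (le_add_of_nonneg_right j.cast_nonneg))).trans_eq ?_
  rw [add_comm (j : ℝ), mul_one_div]

lemma le_sum_log_Gamma_sub {n : ℕ} (hn : 0 < n) :
    Real.log n.factorial / n - Real.log n / n - Real.log (Real.Gamma (1 - 1 / n)) ≤
      ∑ j ∈ range n, (Real.log (Real.Gamma (1 + j)) - Real.log (Real.Gamma (1 + j - 1 / n))) := by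
  obtain ⟨m, rfl⟩ := Nat.exists_eq_add_of_le' hn
  have hterm : ∑ j ∈ range m, Real.log (j + 1) / ((m + 1 : ℕ) : ℝ) ≤
      ∑ j ∈ range m, (Real.log (Real.Gamma (1 + (j + 1 : ℕ))) -
        Real.log (Real.Gamma (1 + (j + 1 : ℕ) - 1 / (m + 1 : ℕ)))) := by
    refine sum_le_sum fun j _ => ?_
    have hinv : (1 : ℝ) / (m + 1 : ℕ) ≤ 1 :=
      div_le_one_of_le₀ (by simp) (by positivity)
    have := log_mul_le_log_Gamma_sub_log_Gamma_sub (x := j + 1) (by positivity) hinv (by positivity)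
    rw [div_eq_mul_one_div, Nat.cast_add_one j, add_comm (1 : ℝ)]
    exact this
  rw [← sum_log_natCast_add_one, sum_div, sum_range_succ, sum_range_succ', ← Nat.cast_add_one m]
  simp only [Nat.cast_zero, add_zero, Real.Gamma_one, Real.log_one]
  linarith

lemma mu0_one_self_eq_mul_prod {n : ℕ} (hn : 1 < n) :
    mu0 1 n n = n * (1 - (n : ℝ)⁻¹ ^ 2) *
      ∏ j ∈ range n, Real.Gamma (1 + j - 1 / n) / Real.Gamma (1 + j) := by
  have : (0 : ℝ) < n := Nat.cast_pos.mpr (by omega)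
  have hpos : (0 : ℝ) < n * n - 1 := by simpa using sq_sub_pos_of_lt hn
  have hΓ : Real.Gamma (n * n) = (n * n - 1) * Real.Gamma (n * n - 1) := by
    simpa using Real.Gamma_add_one hpos.ne'
  have hΓ₀ := (Real.Gamma_pos_of_pos hpos).ne'
  rw [mu0_self_eq, Nat.cast_one, hΓ, prod_div_distrib]
  simp only [one_mul, pow_one]
  generalize ∏ j ∈ range n, Real.Gamma (1 + j - 1 / n) = P
  generalize Real.Gamma (n * n - 1) = Γ at hΓ₀
  field_simp

lemma log_mu0_one_self {n : ℕ} (hn : 1 < n) :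
    Real.log (mu0 1 n n) = Real.log n + Real.log (1 - (n : ℝ)⁻¹ ^ 2) -
      ∑ j ∈ range n, (Real.log (Real.Gamma (1 + j)) - Real.log (Real.Gamma (1 + j - 1 / n))) := by
  have hne := (mu0_self_pos hn).ne'
  rw [mu0_one_self_eq_mul_prod hn] at hne ⊢
  have hleft := left_ne_zero_of_mul hne
  have hdiv : ∀ j ∈ range n, Real.log (Real.Gamma (1 + j - 1 / n) / Real.Gamma (1 + j)) =
      -(Real.log (Real.Gamma (1 + j)) - Real.log (Real.Gamma (1 + j - 1 / n))) := fun j hj => by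
    have hΓ := div_ne_zero_iff.mp (prod_ne_zero_iff.mp (right_ne_zero_of_mul hne) j hj)
    rw [Real.log_div hΓ.1 hΓ.2, neg_sub]
  rw [Real.log_mul hleft (right_ne_zero_of_mul hne),
    Real.log_mul (left_ne_zero_of_mul hleft) (right_ne_zero_of_mul hleft),
    Real.log_prod (prod_ne_zero_iff.mp (right_ne_zero_of_mul hne)), sum_congr rfl hdiv,
    sum_neg_distrib]
  rfl

lemma tendsto_log_Gamma_one_sub_one_div :
    Tendsto (fun n : ℕ => Real.log (Real.Gamma (1 - 1 / n))) atTop (𝓝 0) := by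
  have hΓ : ContinuousAt Real.Gamma 1 :=
    Real.differentiableOn_Gamma_Ioi.continuousOn.continuousAt (Ioi_mem_nhds one_pos)
  have harg : Tendsto (fun n : ℕ => 1 - 1 / (n : ℝ)) atTop (𝓝 1) := by
    simpa using tendsto_one_div_atTop_nhds_zero_nat (𝕜 := ℝ).const_sub 1
  simpa using (hΓ.tendsto.comp harg).log (by simp)

theorem tendsto_mu0_one_self : Tendsto (fun n => mu0 1 n n) atTop (𝓝 (Real.exp 1)) := by
  have hsq : Tendsto (fun n : ℕ => Real.log (1 - (n : ℝ)⁻¹ ^ 2)) atTop (𝓝 0) := by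
    have := ((tendsto_inv_atTop_nhds_zero_nat (𝕜 := ℝ)).pow 2).const_sub 1
    simpa using this.log (by norm_num)
  have hlower := tendsto_log_sub_log_factorial_div.add hsq
  have hupper := (hlower.add tendsto_log_natCast_div).add tendsto_log_Gamma_one_sub_one_div
  simp only [add_zero] at hlower hupper
  have hlog : Tendsto (fun n => Real.log (mu0 1 n n)) atTop (𝓝 1) := by
    refine tendsto_of_tendsto_of_tendsto_of_le_of_le' hlower hupper ?_ ?_ <;>
      filter_upwards [eventually_gt_atTop 1] with n hn <;>
      rw [log_mu0_one_self hn]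
    · linarith [sum_log_Gamma_sub_le hn]
    · linarith [le_sum_log_Gamma_sub (zero_lt_one.trans hn)]
  refine ((Real.continuous_exp.tendsto 1).comp hlog).congr' ?_
  filter_upwards [eventually_gt_atTop 1] with n hn
  exact Real.exp_log (mu0_self_pos hn)

end FirstMoment

/-- for the square case `m = n` (`c = 1`), the `p`-th cumulant (`p ≥ 3`) of
the GLRT statistic under `H₀` satisfies `n^p · κ(p,n) → e^p (p−1)! ζ(p−1)` as `n → ∞`. -/
theorem cumulant_tendsto_square_case (p : ℕ) (hp : 3 ≤ p) :
    Tendsto (fun n : ℕ => (n : ℝ) ^ p * cumulant (fun q => mu0 q n n) p) atTop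
      (𝓝 (Real.exp 1 ^ p * (Nat.factorial (p - 1) : ℝ) * zetaNat (p - 1))) := by
  have hsqrt : ∀ n : ℕ, √(n : ℝ) ^ (2 * p) = (n : ℝ) ^ p := fun n => by
    rw [pow_mul, Real.sq_sqrt n.cast_nonneg]
  have hlim := tendsto_pow_mul_cumulant (s := fun n : ℕ => √n) (μ := fun n q => mu0 q n n)
    (by omega) (tendsto_sqrt_natCast_atTop.eventually_ge_atTop 1)
    ((eventually_gt_atTop 0).mono fun n => mu0_zero_self)
    ((eventually_gt_atTop p).mono fun n hn q hq => mu0_self_pos (hq.trans_lt hn))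
    tendsto_mu0_one_self (fun k hk _ => tendsto_sqrt_pow_mul_logFwdDiff_mu0 hk)
    (by simpa only [hsqrt] using tendsto_pow_mul_logFwdDiff_mu0 hp)
  simpa only [hsqrt, mul_assoc] using hlim
end
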